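/- Let φ(x,y) = a₁x² + a₂xy + a₃y² be a non-degenerate rational quadratic form (a₁,a₂,a₃ ∈ ℚ, a₂² − 4a₁a₃ ≠ 0), let 0 < s < 1 and C ≥ 1. There exist constants ε = ε(φ, s) > 0, δ₀ = δ₀(φ, s, C) > 0, K = K(φ, s) > 0 and an exponent e = e(s) > 0 such that the following holds for all 0 < δ ≤ δ₀. Let A ⊂ [0,1] be any δ-separated set of cardinality ⌈δ^{-s}⌉ such that #(A ∩ I) ≤ C·l^s·(#A) for every interval I of length l ≥ δ. Then for every G ⊆ A × A such that #{y : (x,y) ∈ G} ≥ δ^{ε}(#A) for every x ∈ A and #{x : (x,y) ∈ G} ≥ δ^{ε}(#A) for every y ∈ A, one has E_δ(A +_G A) + E_δ(φ_G(A,A)) ≥ K·C^{-e}·δ^{-ε}·(#A). -/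

import Mathlib

open MeasureTheory Real
open scoped Classical

/-- `E_δ(A)`: the δ-covering number of `A ⊆ ℝ`, the minimal number of sets of
diameter at most `δ` needed to cover `A`. -/
noncomputable def coverNum (δ : ℝ) (A : Set ℝ) : ℕ :=
  sInf {m : ℕ | ∃ F : Finset (Set ℝ), F.card = m ∧
    (∀ U ∈ F, EMetric.diam U ≤ ENNReal.ofReal δ) ∧ A ⊆ ⋃ U ∈ F, U}


set_option maxHeartbeats 1000000

namespace CSP
open scoped Classical Pointwise

/-- Double counting. -/
lemma rep_count {β γ : Type*} (W : Finset β) (V : Finset γ) (r : β → γ → Prop)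
    [∀ a b, Decidable (r a b)] (η c : ℝ)
    (h1 : ∀ w ∈ W, η ≤ ((V.filter (fun v => r w v)).card : ℝ))
    (h2 : ∀ v ∈ V, ((W.filter (fun w => r w v)).card : ℝ) ≤ c) :
    (W.card : ℝ) * η ≤ c * V.card := by
  have h := Finset.sum_card_bipartiteAbove_eq_sum_card_bipartiteBelow r (s := W) (t := V)
  have h' : ∑ w ∈ W, ((V.filter (fun v => r w v)).card : ℝ)
      = ∑ v ∈ V, ((W.filter (fun w => r w v)).card : ℝ) := by
    exact_mod_cast h
  have e1 : (W.card : ℝ) * η ≤ ∑ w ∈ W, ((V.filter (fun v => r w v)).card : ℝ) := by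
    rw [← nsmul_eq_mul]; exact Finset.card_nsmul_le_sum _ _ _ h1
  have e2 : ∑ v ∈ V, ((W.filter (fun w => r w v)).card : ℝ) ≤ V.card * c := by
    rw [← nsmul_eq_mul]; exact Finset.sum_le_card_nsmul _ _ _ h2
  linarith

/-- Cauchy-Schwarz for collisions. -/
lemma collisions {α β : Type*} [DecidableEq β] (s : Finset α) (f : α → β) :
    (s.card : ℝ) ^ 2 ≤ (s.image f).card *
      (((s ×ˢ s).filter (fun p => f p.1 = f p.2)).card : ℝ) := by
  have h1 : (s.card : ℝ) = ∑ b ∈ s.image f, ((s.filter (fun a => f a = b)).card : ℝ) := by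
    exact_mod_cast Finset.card_eq_sum_card_image f s
  have h2 : (((s ×ˢ s).filter (fun p => f p.1 = f p.2)).card : ℝ)
      = ∑ b ∈ s.image f, ((s.filter (fun a => f a = b)).card : ℝ) ^ 2 := by
    have : ((s ×ˢ s).filter (fun p => f p.1 = f p.2)).card
      = ∑ b ∈ s.image f, (s.filter (fun a => f a = b)).card ^ 2 := by
      rw [Finset.card_eq_sum_card_fiberwise (f := fun p : α × α => f p.1) (t := s.image f)]
      · refine Finset.sum_congr rfl fun b hb => ?_
        rw [sq, ← Finset.card_product]
        congr 1
        ext ⟨x, y⟩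
        simp only [Finset.mem_filter, Finset.mem_product]
        constructor
        · rintro ⟨⟨⟨h1, h2⟩, h3⟩, h4⟩
          exact ⟨⟨h1, h4⟩, h2, by rw [← h3, h4]⟩
        · rintro ⟨⟨h1, h4⟩, h2, h3⟩
          exact ⟨⟨⟨h1, h2⟩, by rw [h4, h3]⟩, h4⟩
      · intro p hp
        simp only [Finset.coe_filter, Finset.mem_product, Set.mem_ofPred_eq] at hp
        simp only [Finset.coe_image]
        exact ⟨p.1, hp.1.1, rfl⟩
    exact_mod_cast this
  rw [h2]
  conv_lhs => rw [h1]
  exact sq_sum_le_card_mul_sum_sq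

/-- Separated subsets. -/
lemma exists_sep (X : Finset ℤ) (d M : ℝ) (hd : 0 ≤ d)
    (hM : ∀ x : ℝ, ((X.filter (fun t : ℤ => x ≤ t ∧ (t : ℝ) ≤ x + 2 * d)).card : ℝ) ≤ M) :
    ∃ Z ⊆ X, (∀ z : ℤ, z ∈ Z → ∀ z' : ℤ, z' ∈ Z → z ≠ z' → d < |(z : ℝ) - (z' : ℝ)|) ∧ (X.card : ℝ) ≤ M * Z.card := by
  obtain ⟨Z, hZ, hmax⟩ := Finset.exists_max_image
    (X.powerset.filter (fun Z => ∀ z : ℤ, z ∈ Z → ∀ z' : ℤ, z' ∈ Z → z ≠ z' → d < |(z : ℝ) - (z' : ℝ)|)) Finset.card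
    ⟨∅, by simp⟩
  simp only [Finset.mem_filter, Finset.mem_powerset] at hZ hmax
  refine ⟨Z, hZ.1, hZ.2, ?_⟩
  have key : ∀ x ∈ X, ∃ z ∈ Z, |(x : ℝ) - z| ≤ d := by
    intro x hx
    by_contra hcon
    push Not at hcon
    have hxZ : x ∉ Z := fun h => by
      have := hcon x h
      simp at this
      linarith
    have := hmax (insert x Z) ⟨Finset.insert_subset hx hZ.1, by
      intro z hz z' hz' hne
      rw [Finset.mem_insert] at hz hz'
      rcases hz with rfl | hz <;> rcases hz' with rfl | hz'
      · exact absurd rfl hne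
      · exact hcon _ hz'
      · rw [abs_sub_comm]; exact hcon _ hz
      · exact hZ.2 z hz z' hz' hne⟩
    rw [Finset.card_insert_of_notMem hxZ] at this
    omega
  have := rep_count X Z (fun x z => |(x : ℝ) - z| ≤ d) 1 M (by
      intro x hx
      obtain ⟨z, hz, h⟩ := key x hx
      have : 0 < (Z.filter (fun z : ℤ => |(x : ℝ) - z| ≤ d)).card :=
        Finset.card_pos.mpr ⟨z, by simp [hz, h]⟩
      exact_mod_cast this) (by
      intro z hz
      refine le_trans ?_ (hM (z - d))
      refine Nat.cast_le.mpr (Finset.card_le_card ?_)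
      intro x hx
      simp only [Finset.mem_filter] at hx ⊢
      refine ⟨hx.1, ?_⟩
      rw [abs_le] at hx
      constructor <;> linarith [hx.2.1, hx.2.2])
  linarith

/-- Plünnecke–Ruzsa with real constants. -/
lemma plr (A U : Finset ℤ) (hA : A.Nonempty) (n : ℕ) (c : ℝ)
    (h : ((A + U).card : ℝ) ≤ c * A.card) :
    ((n • U - n • U).card : ℝ) ≤ c ^ (2 * n) * A.card := by
  have h1 := Finset.pluennecke_ruzsa_inequality_nsmul_sub_nsmul_add hA U n n
  have h2 : ((n • U - n • U).card : ℝ) ≤ (((A + U).card : ℝ) / A.card) ^ (n + n) * A.card := by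
    have h3 := (NNRat.cast_le (K := ℝ)).mpr h1
    push_cast at h3
    exact h3
  have hp : (0 : ℝ) < A.card := by exact_mod_cast hA.card_pos
  refine h2.trans ?_
  rw [two_mul]
  gcongr
  rwa [div_le_iff₀ hp]

/-- Balog–Szemerédi–Gowers, one set version. -/
lemma bsg (A : Finset ℤ) (G : Finset (ℤ × ℤ)) (K : ℝ) (hK : 1 ≤ K) (hA : A.Nonempty)
    (hG : G ⊆ A ×ˢ A)
    (hcol : ∀ y ∈ A, (A.card : ℝ) ≤ K * (A.filter (fun x => (x, y) ∈ G)).card)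
    (hS : ((G.image (fun p => p.1 + p.2)).card : ℝ) ≤ K * A.card) :
    ∃ A' ⊆ A, (A.card : ℝ) ≤ 2 * K * A'.card ∧
      ((A' - A').card : ℝ) ≤ 512 * K ^ 9 * A.card := by
  set n : ℝ := (A.card : ℝ) with hn
  have hn0 : 0 < n := by rw [hn]; exact_mod_cast hA.card_pos
  have hK0 : 0 < K := by linarith
  set S := G.image (fun p => p.1 + p.2) with hSdef
  let θ : ℝ := 1 / (16 * K ^ 2)
  have hθ : 0 < θ := by positivity
  let com : ℤ → ℤ → Finset ℤ := fun a a' => A.filter (fun y => (a, y) ∈ G ∧ (a', y) ∈ G)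
  let bad : ℤ → ℤ → Prop := fun a a' => ((com a a').card : ℝ) < θ * n
  let P := (A ×ˢ A).filter (fun p => bad p.1 p.2)
  -- choose y
  obtain ⟨y, hy, hyP⟩ : ∃ y ∈ A,
      ((P.filter (fun p => (p.1, y) ∈ G ∧ (p.2, y) ∈ G)).card : ℝ) ≤ θ * n ^ 2 := by
    apply Finset.exists_le_of_sum_le hA
    have h := Finset.sum_card_bipartiteAbove_eq_sum_card_bipartiteBelow
      (fun (y : ℤ) (p : ℤ × ℤ) => (p.1, y) ∈ G ∧ (p.2, y) ∈ G) (s := A) (t := P)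
    have h' : ∑ y ∈ A, ((P.filter (fun p => (p.1, y) ∈ G ∧ (p.2, y) ∈ G)).card : ℝ)
        = ∑ p ∈ P, ((com p.1 p.2).card : ℝ) := by exact_mod_cast h
    rw [h']
    have h3 : ∑ p ∈ P, ((com p.1 p.2).card : ℝ) ≤ P.card * (θ * n) := by
      rw [← nsmul_eq_mul]
      apply Finset.sum_le_card_nsmul
      intro p hp
      exact (Finset.mem_filter.mp hp).2.le
    have h4 : (P.card : ℝ) ≤ n * n := by
      rw [hn]; norm_cast
      rw [← Finset.card_product]
      exact Finset.card_filter_le _ _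
    simp only [Finset.sum_const, nsmul_eq_mul]
    rw [← hn]
    calc _ ≤ _ := h3
      _ ≤ (n * n) * (θ * n) := by gcongr
      _ = _ := by ring
  let N := A.filter (fun x => (x, y) ∈ G)
  set m : ℝ := (N.card : ℝ) with hm
  have hnm : n ≤ K * m := hcol y hy
  have hm0 : 0 < m := by
    by_contra h
    have : K * m ≤ 0 := mul_nonpos_of_nonneg_of_nonpos hK0.le (not_lt.mp h)
    linarith
  have hbadN : ((P.filter (fun p => (p.1, y) ∈ G ∧ (p.2, y) ∈ G)).card : ℝ) ≤ m ^ 2 / 16 := by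
    refine hyP.trans ?_
    have : n ^ 2 ≤ (K * m) ^ 2 := by gcongr
    calc θ * n ^ 2 ≤ θ * (K * m) ^ 2 := by gcongr
      _ = m ^ 2 / 16 := by simp only [θ]; field_simp
  let A' := N.filter (fun a => ((N.filter (fun a'' => bad a a'')).card : ℝ) ≤ m / 4)
  let Ac := N.filter (fun a => ¬ ((N.filter (fun a'' => bad a a'')).card : ℝ) ≤ m / 4)
  have hsplit : (A'.card : ℝ) + Ac.card = m := by
    rw [hm]; norm_cast
    exact Finset.card_filter_add_card_filter_not _
  have hNA : N ⊆ A := Finset.filter_subset _ _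
  have hAc : (Ac.card : ℝ) * (m / 4) ≤ m ^ 2 / 16 := by
    have := rep_count Ac (P.filter (fun p => (p.1, y) ∈ G ∧ (p.2, y) ∈ G))
      (fun a p => p.1 = a) (m / 4) 1 (by
        intro a ha
        have ha' := Finset.mem_filter.mp ha
        refine (not_le.mp ha'.2).le.trans ?_
        norm_cast
        apply Finset.card_le_card_of_injOn (fun a'' => (a, a''))
        · intro a'' h''
          simp only [Finset.coe_filter, Set.mem_ofPred_eq] at h''
          have h1 := Finset.mem_filter.mp ha'.1
          have h2 := Finset.mem_filter.mp h''.1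
          simp only [Finset.coe_filter, Set.mem_ofPred_eq, Finset.mem_filter, P, Finset.mem_product]
          exact ⟨⟨⟨⟨h1.1, h2.1⟩, h''.2⟩, h1.2, h2.2⟩, trivial⟩
        · intro u _ v _ h
          exact (Prod.mk.inj h).2) (by
        intro p _
        norm_cast
        rw [Finset.card_le_one]
        intro u hu v hv
        rw [← (Finset.mem_filter.mp hu).2, ← (Finset.mem_filter.mp hv).2])
    linarith
  have hAc' : (Ac.card : ℝ) ≤ m / 4 := by
    have : (Ac.card : ℝ) * (m / 4) ≤ (m / 4) * (m / 4) := by nlinarith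
    exact le_of_mul_le_mul_right this (by positivity)
  refine ⟨A', (Finset.filter_subset _ _).trans hNA, ?_, ?_⟩
  · have : m / 2 ≤ A'.card := by linarith
    nlinarith
  · have := rep_count (A' - A') ((S ×ˢ S) ×ˢ (S ×ˢ S))
      (fun d v => v.1.1 - v.1.2 + (v.2.1 - v.2.2) = d) ((m / 2) * (θ * n) ^ 2) 1 (by
        intro d hd
        obtain ⟨a, ha, a', ha', rfl⟩ := Finset.mem_sub.mp hd
        have ha1 := Finset.mem_filter.mp ha
        have ha2 := Finset.mem_filter.mp ha'
        let gd := N.filter (fun a'' => ¬ bad a a'' ∧ ¬ bad a' a'')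
        have hgd : m / 2 ≤ gd.card := by
          have : N.card ≤ gd.card + (N.filter (fun a'' => bad a a'')).card
              + (N.filter (fun a'' => bad a' a'')).card := by
            have hsub : N ⊆ gd ∪ (N.filter (fun a'' => bad a a''))
              ∪ (N.filter (fun a'' => bad a' a'')) := by
              intro u hu
              simp only [Finset.mem_union, Finset.mem_filter, gd]
              tauto
            exact (Finset.card_le_card hsub).trans ((Finset.card_union_le _ _).trans
              (Nat.add_le_add_right (Finset.card_union_le _ _) _))
          have h' : m ≤ (gd.card : ℝ) + (N.filter (fun a'' => bad a a'')).card
              + (N.filter (fun a'' => bad a' a'')).card := by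
            rw [hm]; exact_mod_cast this
          linarith [ha1.2, ha2.2]
        let T : Finset (Σ _ : ℤ, ℤ × ℤ) := gd.sigma (fun a'' => com a a'' ×ˢ com a' a'')
        have hT : (m / 2) * (θ * n) ^ 2 ≤ T.card := by
          have : (T.card : ℝ) = ∑ a'' ∈ gd, ((com a a'').card : ℝ) * (com a' a'').card := by
            simp only [T, Finset.card_sigma, Finset.card_product]
            push_cast; rfl
          rw [this]
          calc (m / 2) * (θ * n) ^ 2 ≤ gd.card * (θ * n) ^ 2 := by gcongr
            _ = gd.card • (θ * n) ^ 2 := by rw [nsmul_eq_mul]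
            _ ≤ _ := by
              apply Finset.card_nsmul_le_sum
              intro a'' h''
              have h3 := (Finset.mem_filter.mp h'').2
              have h4 := not_lt.mp h3.1
              have h5 := not_lt.mp h3.2
              rw [sq]
              gcongr
        refine hT.trans ?_
        norm_cast
        apply Finset.card_le_card_of_injOn
          (fun t => ((a + t.2.1, t.1 + t.2.1), (t.1 + t.2.2, a' + t.2.2)))
        · rintro ⟨a'', b, b'⟩ ht
          simp only [T, Finset.coe_sigma, Set.mem_sigma_iff, Finset.coe_product, Set.mem_prod,
            Finset.mem_coe, com, Finset.mem_filter] at ht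
          obtain ⟨_, ⟨_, h1, h2⟩, _, h3, h4⟩ := ht
          simp only [Finset.coe_filter, Set.mem_ofPred_eq, Finset.mem_product]
          have hmem : ∀ x y, (x, y) ∈ G → x + y ∈ S := fun x y h =>
            Finset.mem_image.mpr ⟨(x, y), h, rfl⟩
          exact ⟨⟨⟨hmem _ _ h1, hmem _ _ h2⟩, hmem _ _ h4, hmem _ _ h3⟩, by ring⟩
        · rintro ⟨a1, b, b'⟩ _ ⟨a2, c, c'⟩ _ h
          simp only [Prod.mk.injEq] at h
          obtain ⟨⟨h1, h2⟩, h3, h4⟩ := h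
          have e1 : b = c := by linarith
          have e2 : b' = c' := by linarith
          subst e1; subst e2
          have e3 : a1 = a2 := by linarith
          subst e3; rfl) (by
        intro v _
        norm_cast
        rw [Finset.card_le_one]
        intro u hu w hw
        rw [← (Finset.mem_filter.mp hu).2, ← (Finset.mem_filter.mp hw).2])
    simp only [Finset.card_product] at this
    push_cast at this
    have hS4 : (S.card : ℝ) * S.card * (S.card * S.card) ≤ (K * n) * (K * n) * ((K * n) * (K * n)) := by
      gcongr
    have h5 : ((A' - A').card : ℝ) * (m / 2 * (θ * n) ^ 2) ≤ K ^ 4 * n ^ 4 := by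
      nlinarith
    have h6 : n / (2 * K) * (θ * n) ^ 2 ≤ m / 2 * (θ * n) ^ 2 := by
      apply mul_le_mul_of_nonneg_right _ (by positivity)
      rw [div_le_div_iff₀ (by positivity) (by positivity)]
      nlinarith
    have h7 : ((A' - A').card : ℝ) * (n / (2 * K) * (θ * n) ^ 2) ≤ K ^ 4 * n ^ 4 :=
      (mul_le_mul_of_nonneg_left h6 (by positivity)).trans h5
    have h8 : n / (2 * K) * (θ * n) ^ 2 = n ^ 3 / (512 * K ^ 5) := by
      simp only [θ]; field_simp; norm_num
    rw [h8, mul_div_assoc', div_le_iff₀ (by positivity)] at h7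
    have h9 : ((A' - A').card : ℝ) * n ^ 3 ≤ (512 * K ^ 9 * n) * n ^ 3 := by
      calc _ ≤ _ := h7
        _ = _ := by ring
    exact le_of_mul_le_mul_right h9 (by positivity)

end CSP

namespace CSP
open scoped Classical Pointwise

lemma struct (A : Finset ℤ) (G : Finset (ℤ × ℤ)) (K : ℝ) (hK : 10 ≤ K) (hA : A.Nonempty)
    (hG : G ⊆ A ×ˢ A)
    (hrow : ∀ x ∈ A, (A.card : ℝ) ≤ K * (A.filter (fun y => (x, y) ∈ G)).card)
    (hcol : ∀ y ∈ A, (A.card : ℝ) ≤ K * (A.filter (fun x => (x, y) ∈ G)).card)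
    (hS : ((G.image (fun p => p.1 + p.2)).card : ℝ) ≤ K * A.card) :
    ∃ A' ⊆ A, ∃ B' ⊆ A, A'.Nonempty ∧ (A.card : ℝ) ≤ K ^ 2 * A'.card ∧
      (A.card : ℝ) ^ 2 ≤ K ^ 3 * (G.filter (fun p => p.1 ∈ A' ∧ p.2 ∈ B')).card ∧
      ∀ n : ℕ, ((n • ((-A') ∪ B' ∪ {0}) - n • ((-A') ∪ B' ∪ {0})).card : ℝ)
        ≤ K ^ (34 * n) * A.card := by
  have hK0 : 0 < K := by linarith
  obtain ⟨A', hA', hAA, hdiff⟩ := bsg A G K (by linarith) hA hG hcol hS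
  set n : ℝ := (A.card : ℝ) with hn
  have hn0 : 0 < n := by rw [hn]; exact_mod_cast hA.card_pos
  set m : ℝ := (A'.card : ℝ) with hm
  have hm0 : 0 < m := by
    by_contra h
    have : 2 * K * m ≤ 0 := mul_nonpos_of_nonneg_of_nonpos (by linarith) (not_lt.mp h)
    linarith
  have hA'ne : A'.Nonempty := by
    rw [← Finset.card_pos]; rw [hm] at hm0; exact_mod_cast hm0
  set S := G.image (fun p => p.1 + p.2) with hSdef
  let B' := A.filter (fun y => m / (2 * K) ≤ ((A'.filter (fun x => (x, y) ∈ G)).card : ℝ))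
  have hB' : B' ⊆ A := Finset.filter_subset _ _
  -- dense part of the graph
  have hG1 : m * (n / K) ≤ ((G.filter (fun p => p.1 ∈ A')).card : ℝ) := by
    have := rep_count A' (G.filter (fun p => p.1 ∈ A')) (fun x p => p.1 = x) (n / K) 1 (by
      intro x hx
      rw [div_le_iff₀ hK0, mul_comm]
      refine (hrow x (hA' hx)).trans ?_
      gcongr
      apply Finset.card_le_card_of_injOn (fun y => (x, y))
      · intro y hy
        simp only [Finset.coe_filter, Set.mem_ofPred_eq] at hy
        simp only [Finset.coe_filter, Set.mem_ofPred_eq, Finset.mem_filter]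
        exact ⟨⟨hy.2, hx⟩, trivial⟩
      · intro u _ v _ h
        exact (Prod.mk.inj h).2) (by
      intro p _
      norm_cast
      rw [Finset.card_le_one]
      intro u hu v hv
      rw [← (Finset.mem_filter.mp hu).2, ← (Finset.mem_filter.mp hv).2])
    linarith
  have hG2 : ((G.filter (fun p => p.1 ∈ A' ∧ p.2 ∉ B')).card : ℝ) ≤ n * (m / (2 * K)) := by
    have := rep_count (G.filter (fun p => p.1 ∈ A' ∧ p.2 ∉ B')) A (fun p y => p.2 = y) 1
      (m / (2 * K)) (by
        intro p hp
        have hp' := Finset.mem_filter.mp hp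
        have h2 := (Finset.mem_product.mp (hG hp'.1)).2
        have : 0 < (A.filter (fun y => p.2 = y)).card := Finset.card_pos.mpr ⟨p.2, by simp [h2]⟩
        exact_mod_cast this) (by
        intro y hy
        by_cases hyB : y ∈ B'
        · have : (G.filter (fun p => p.1 ∈ A' ∧ p.2 ∉ B')).filter (fun p => p.2 = y) = ∅ := by
            rw [Finset.filter_eq_empty_iff]
            rintro p hp rfl
            exact (Finset.mem_filter.mp hp).2.2 hyB
          rw [this]
          simp; positivity
        · have h1 : ¬ (m / (2 * K) ≤ ((A'.filter (fun x => (x, y) ∈ G)).card : ℝ)) := fun h =>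
            hyB (Finset.mem_filter.mpr ⟨hy, h⟩)
          refine le_trans ?_ (not_le.mp h1).le
          refine Nat.cast_le.mpr ?_
          apply Finset.card_le_card_of_injOn (fun p => p.1)
          · intro p hp
            simp only [Finset.coe_filter, Set.mem_ofPred_eq, Finset.mem_filter] at hp
            obtain ⟨⟨g1, g2, g3⟩, g4⟩ := hp
            simp only [Finset.coe_filter, Set.mem_ofPred_eq]
            rw [← g4]
            exact ⟨g2, g1⟩
          · intro u hu v hv h
            simp only [Finset.coe_filter, Set.mem_ofPred_eq, Finset.mem_filter] at hu hv
            exact Prod.ext h (hu.2.trans hv.2.symm))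
    linarith
  have hG3 : ((G.filter (fun p => p.1 ∈ A')).card : ℝ)
      ≤ (G.filter (fun p => p.1 ∈ A' ∧ p.2 ∈ B')).card
        + (G.filter (fun p => p.1 ∈ A' ∧ p.2 ∉ B')).card := by
    norm_cast
    rw [← Finset.card_union_of_disjoint]
    · apply Finset.card_le_card
      intro p hp
      simp only [Finset.mem_union, Finset.mem_filter] at hp ⊢
      tauto
    · rw [Finset.disjoint_filter]
      tauto
  have hGd : m * n / (2 * K) ≤ ((G.filter (fun p => p.1 ∈ A' ∧ p.2 ∈ B')).card : ℝ) := by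
    have e : m * (n / K) = 2 * (m * n / (2 * K)) := by field_simp
    have e2 : n * (m / (2 * K)) = m * n / (2 * K) := by ring
    linarith
  -- sum set
  have hsum : ((A' + B').card : ℝ) ≤ 2048 * K ^ 12 * n := by
    have := rep_count (A' + B') ((A' - A') ×ˢ S) (fun w v => v.1 + v.2 = w) (m / (2 * K)) 1 (by
      intro w hw
      obtain ⟨a, ha, b, hb, rfl⟩ := Finset.mem_add.mp hw
      refine (Finset.mem_filter.mp hb).2.trans ?_
      refine Nat.cast_le.mpr ?_
      apply Finset.card_le_card_of_injOn (fun x => (a - x, x + b))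
      · intro x hx
        simp only [Finset.coe_filter, Set.mem_ofPred_eq] at hx
        simp only [Finset.coe_filter, Set.mem_ofPred_eq, Finset.mem_product]
        exact ⟨⟨Finset.sub_mem_sub ha hx.1, Finset.mem_image.mpr ⟨(x, b), hx.2, rfl⟩⟩, by ring⟩
      · intro u _ v _ h
        have := (Prod.mk.inj h).2
        linarith) (by
      intro v _
      norm_cast
      rw [Finset.card_le_one]
      intro u hu w hw
      rw [← (Finset.mem_filter.mp hu).2, ← (Finset.mem_filter.mp hw).2])
    rw [Finset.card_product] at this
    push_cast at this
    have h1 : ((A' - A').card : ℝ) * S.card ≤ (512 * K ^ 9 * n) * (K * n) := by gcongr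
    have h2 : n / (4 * K ^ 2) ≤ m / (2 * K) := by
      rw [div_le_div_iff₀ (by positivity) (by positivity)]
      nlinarith [mul_le_mul_of_nonneg_left hAA (by positivity : 0 ≤ 2 * K)]
    have h3 : ((A' + B').card : ℝ) * (n / (4 * K ^ 2)) ≤ (512 * K ^ 9 * n) * (K * n) :=
      (mul_le_mul_of_nonneg_left h2 (by positivity)).trans (by linarith)
    rw [mul_div_assoc', div_le_iff₀ (by positivity)] at h3
    have h9 : ((A' + B').card : ℝ) * n ≤ (2048 * K ^ 12 * n) * n := by
      calc _ ≤ _ := h3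
        _ = _ := by ring
    exact le_of_mul_le_mul_right h9 (by positivity)
  refine ⟨A', hA', B', hB', hA'ne, ?_, ?_, ?_⟩
  · nlinarith
  · have : n ^ 2 ≤ 4 * K ^ 2 * (m * n / (2 * K)) := by
      have e : 4 * K ^ 2 * (m * n / (2 * K)) = (2 * K * m) * n := by field_simp; norm_num
      rw [e, sq]
      gcongr
    have h2 : 4 * K ^ 2 * (m * n / (2 * K)) ≤ K ^ 3 * (m * n / (2 * K)) := by
      apply mul_le_mul_of_nonneg_right _ (by positivity)
      nlinarith [sq_nonneg K]
    refine this.trans (h2.trans ?_)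
    gcongr
  · intro k
    have hU : ((A' + ((-A') ∪ B' ∪ {0})).card : ℝ) ≤ K ^ 17 * m := by
      have h1 : (A' + ((-A') ∪ B' ∪ {0})).card ≤ (A' - A').card + (A' + B').card + A'.card := by
        rw [Finset.add_union, Finset.add_union]
        refine (Finset.card_union_le _ _).trans ?_
        refine Nat.add_le_add ((Finset.card_union_le _ _).trans ?_) ?_
        · rw [← sub_eq_add_neg]
        · simp
      have h2 : ((A' + ((-A') ∪ B' ∪ {0})).card : ℝ)
          ≤ (A' - A').card + (A' + B').card + m := by rw [hm]; exact_mod_cast h1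
      have h3 : (1:ℝ) ≤ K := by linarith
      have h4 : K ^ 9 ≤ K ^ 12 := pow_le_pow_right₀ h3 (by norm_num)
      have h5 : m ≤ K ^ 13 * m := le_mul_of_one_le_left hm0.le (one_le_pow₀ h3)
      have h6 : 512 * K ^ 9 * n ≤ 512 * K ^ 12 * n := by gcongr
      have h7 : 2560 * K ^ 12 * n ≤ 2560 * K ^ 12 * (2 * K * m) := by gcongr
      have h8 : 2560 * K ^ 12 * (2 * K * m) = 5120 * (K ^ 13 * m) := by ring
      have h9 : (10:ℝ) ^ 4 ≤ K ^ 4 := by gcongr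
      have h10 : (10:ℝ) ^ 4 * (K ^ 13 * m) ≤ K ^ 4 * (K ^ 13 * m) := by gcongr
      have h11 : K ^ 4 * (K ^ 13 * m) = K ^ 17 * m := by ring
      have : 0 < K ^ 13 * m := by positivity
      linarith
    have := plr A' _ hA'ne k (K ^ 17) hU
    refine this.trans ?_
    rw [← pow_mul]
    have e : 17 * (2 * k) = 34 * k := by ring
    rw [e]
    gcongr
    rw [hn]
    exact Nat.cast_le.mpr (Finset.card_le_card hA')

end CSP

namespace CSP
open scoped Classical Pointwise

lemma card_le_of_diam (I : Finset ℤ) (d : ℝ) (hd : 0 ≤ d)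
    (h : ∀ x : ℤ, x ∈ I → ∀ y : ℤ, y ∈ I → (x : ℝ) - y ≤ d) : (I.card : ℝ) ≤ d + 1 := by
  rcases I.eq_empty_or_nonempty with rfl | hne
  · simp; linarith
  · have h1 := h _ (I.max'_mem hne) _ (I.min'_mem hne)
    have h2 : I ⊆ Finset.Icc (I.min' hne) (I.max' hne) := fun x hx =>
      Finset.mem_Icc.mpr ⟨I.min'_le x hx, I.le_max' x hx⟩
    have h3 := Finset.card_le_card h2
    rw [Int.card_Icc] at h3
    have h4 : I.min' hne ≤ I.max' hne := I.min'_le _ (I.max'_mem hne)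
    have h5 : (I.card : ℤ) ≤ I.max' hne + 1 - I.min' hne := by omega
    have h6 : (I.card : ℝ) ≤ (I.max' hne : ℝ) + 1 - (I.min' hne : ℝ) := by exact_mod_cast h5
    linarith

lemma floor_eq_abs {u v N : ℝ} (hN : 0 < N) (h : ⌊u / N⌋ = ⌊v / N⌋) : |u - v| < N := by
  have h1 := Int.abs_sub_lt_one_of_floor_eq_floor h
  rw [← sub_div, abs_div, abs_of_pos hN, div_lt_one hN] at h1
  exact h1

set_option maxHeartbeats 4000000 in
lemma energy (α₁ α₂ α₃ : ℤ) (hdisc : α₂ ^ 2 - 4 * α₁ * α₃ ≠ 0) (N L h k g : ℝ) (hN : 1 ≤ N)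
    (hL : 1 ≤ L) (A' B' Q T : Finset ℤ) (G : Finset (ℤ × ℤ)) (hG : G ⊆ A' ×ˢ B')
    (hpos : ∀ p ∈ G, N / L ≤ (p.1 : ℝ))
    (hQ : ∀ x ∈ A', ∀ x' ∈ A', ∀ y ∈ B', ∀ y' ∈ B', 2 * α₁ * (x - x') + α₂ * (y - y') ∈ Q)
    (hT : ∀ x ∈ A', ∀ x' ∈ A', ∀ y ∈ B', ∀ y' ∈ B', α₂ * (x - x') + 2 * α₃ * (y - y') ∈ T)
    (hh : 0 < h) (hk : 0 < k) (hg : 0 < g)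
    (h1 : ((A' + A').card : ℝ) ≤ h) (h2 : ((B' + B').card : ℝ) ≤ h) (h3 : (T.card : ℝ) ≤ h)
    (h4 : ((B' + B' + Q).card : ℝ) ≤ h) (h5 : ((B' + B' + T).card : ℝ) ≤ h)
    (h6 : ((G.image (fun p => ⌊((α₁ * p.1 ^ 2 + α₂ * (p.1 * p.2) + α₃ * p.2 ^ 2 : ℤ) : ℝ) / N⌋)).card : ℝ) ≤ k)
    (h7 : g ≤ (G.card : ℝ)) :
    ∃ p₀ ∈ A' + A', N / L ≤ (p₀ : ℝ) ∧ ∃ R ⊆ B' + B', g ^ 2 ≤ 10 * L * k * h ^ 2 * R.card ∧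
      ∀ r ∈ R, ((((B' + B') ×ˢ (B' + B')).image
        (fun b => ⌊((p₀ * b.1 + r * b.2 : ℤ) : ℝ) / N⌋)).card : ℝ) * g ^ 2 ≤ 10 * k * h ^ 4 := by
  have hN0 : 0 < N := by linarith
  have hL0 : 0 < L := by linarith
  set f : ℤ × ℤ → ℤ :=
    fun p => ⌊((α₁ * p.1 ^ 2 + α₂ * (p.1 * p.2) + α₃ * p.2 ^ 2 : ℤ) : ℝ) / N⌋ with hf
  set E := (G ×ˢ G).filter (fun p => f p.1 = f p.2) with hE
  have hEc : g ^ 2 ≤ k * E.card := by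
    have := collisions G f
    calc g ^ 2 ≤ (G.card : ℝ) ^ 2 := by gcongr
      _ ≤ _ := this
      _ ≤ _ := by gcongr
  have hEmem : ∀ e ∈ E, e.1.1 ∈ A' ∧ e.1.2 ∈ B' ∧ e.2.1 ∈ A' ∧ e.2.2 ∈ B' ∧
      N / L ≤ (e.1.1 : ℝ) ∧ N / L ≤ (e.2.1 : ℝ) ∧
      |(((e.1.1 + e.2.1) * (2 * α₁ * (e.1.1 - e.2.1) + α₂ * (e.1.2 - e.2.2))
        + (e.1.2 + e.2.2) * (α₂ * (e.1.1 - e.2.1) + 2 * α₃ * (e.1.2 - e.2.2)) : ℤ) : ℝ)| < 2 * N := by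
    intro e he
    have he' := Finset.mem_filter.mp he
    have hm := Finset.mem_product.mp he'.1
    have ha := Finset.mem_product.mp (hG hm.1)
    have hb := Finset.mem_product.mp (hG hm.2)
    refine ⟨ha.1, ha.2, hb.1, hb.2, hpos _ hm.1, hpos _ hm.2, ?_⟩
    have hfl := floor_eq_abs hN0 he'.2
    have e1 : (((e.1.1 + e.2.1) * (2 * α₁ * (e.1.1 - e.2.1) + α₂ * (e.1.2 - e.2.2))
        + (e.1.2 + e.2.2) * (α₂ * (e.1.1 - e.2.1) + 2 * α₃ * (e.1.2 - e.2.2)) : ℤ) : ℝ)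
        = 2 * (((α₁ * e.1.1 ^ 2 + α₂ * (e.1.1 * e.1.2) + α₃ * e.1.2 ^ 2 : ℤ) : ℝ)
          - ((α₁ * e.2.1 ^ 2 + α₂ * (e.2.1 * e.2.2) + α₃ * e.2.2 ^ 2 : ℤ) : ℝ)) := by
      push_cast; ring
    rw [e1, abs_mul, abs_two]
    linarith
  have hEpos : (0 : ℝ) < E.card := by
    by_contra hc
    have : k * (E.card : ℝ) ≤ 0 := mul_nonpos_of_nonneg_of_nonpos hk.le (not_lt.mp hc)
    have : 0 < g ^ 2 := by positivity
    linarith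
  have hEne : E.Nonempty := by
    rw [← Finset.card_pos]; exact_mod_cast hEpos
  -- choose p₀
  let P := A' + A'
  have hPne : P.Nonempty := by
    obtain ⟨e, he⟩ := hEne
    exact ⟨_, Finset.add_mem_add (hEmem e he).1 (hEmem e he).1⟩
  obtain ⟨p₀, hp₀, hEp⟩ : ∃ p₀ ∈ P, (E.card : ℝ) / h
      ≤ ((E.filter (fun e => e.1.1 + e.2.1 = p₀)).card : ℝ) := by
    apply Finset.exists_le_of_sum_le hPne
    have hs : (E.card : ℝ) = ∑ p ∈ P, ((E.filter (fun e => e.1.1 + e.2.1 = p)).card : ℝ) := by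
      exact_mod_cast Finset.card_eq_sum_card_fiberwise (f := fun e : (ℤ × ℤ) × (ℤ × ℤ) => e.1.1 + e.2.1) (t := P) (by
        intro e he
        exact Finset.add_mem_add (hEmem e he).1 (hEmem e he).2.2.1)
    rw [← hs, Finset.sum_const, nsmul_eq_mul, mul_div_assoc', div_le_iff₀ hh, mul_comm]
    gcongr
  set E₀ := E.filter (fun e => e.1.1 + e.2.1 = p₀) with hE₀
  have hE₀pos : (0 : ℝ) < E₀.card := lt_of_lt_of_le (by positivity) hEp
  have hp₀pos : N / L ≤ (p₀ : ℝ) := by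
    have : E₀.Nonempty := by rw [← Finset.card_pos]; exact_mod_cast hE₀pos
    obtain ⟨e, he⟩ := this
    have he' := Finset.mem_filter.mp he
    have := hEmem e he'.1
    rw [← he'.2]
    push_cast
    have : 0 < N / L := by positivity
    linarith
  have hp₀0 : (0 : ℝ) < p₀ := lt_of_lt_of_le (by positivity) hp₀pos
  let qf : (ℤ × ℤ) × (ℤ × ℤ) → ℤ := fun e => 2 * α₁ * (e.1.1 - e.2.1) + α₂ * (e.1.2 - e.2.2)
  let tf : (ℤ × ℤ) × (ℤ × ℤ) → ℤ := fun e => α₂ * (e.1.1 - e.2.1) + 2 * α₃ * (e.1.2 - e.2.2)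
  let F : ℤ → Finset ((ℤ × ℤ) × (ℤ × ℤ)) := fun r => E₀.filter (fun e => e.1.2 + e.2.2 = r)
  have hFmem : ∀ r, ∀ e ∈ F r, e ∈ E ∧ e.1.1 + e.2.1 = p₀ ∧ e.1.2 + e.2.2 = r ∧ qf e ∈ Q ∧ tf e ∈ T ∧
      |((p₀ * qf e + r * tf e : ℤ) : ℝ)| < 2 * N := by
    intro r e he
    have he1 := Finset.mem_filter.mp he
    have he2 := Finset.mem_filter.mp he1.1
    obtain ⟨a1, a2, a3, a4, a5, a6, a7⟩ := hEmem e he2.1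
    refine ⟨he2.1, he2.2, he1.2, hQ _ a1 _ a3 _ a2 _ a4, hT _ a1 _ a3 _ a2 _ a4, ?_⟩
    rw [he2.2, he1.2] at a7
    exact a7
  have hFinj : ∀ r, ∀ e ∈ F r, ∀ e' ∈ F r, qf e = qf e' → tf e = tf e' → e = e' := by
    intro r e he e' he' hq ht
    obtain ⟨_, b1, b2, _⟩ := hFmem r e he
    obtain ⟨_, c1, c2, _⟩ := hFmem r e' he'
    simp only [qf, tf] at hq ht
    have d1 : (α₂ ^ 2 - 4 * α₁ * α₃) * ((e.1.1 - e.2.1) - (e'.1.1 - e'.2.1)) = 0 := by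
      linear_combination α₂ * ht - 2 * α₃ * hq
    have d2 : (α₂ ^ 2 - 4 * α₁ * α₃) * ((e.1.2 - e.2.2) - (e'.1.2 - e'.2.2)) = 0 := by
      linear_combination α₂ * hq - 2 * α₁ * ht
    have d1' := (mul_eq_zero.mp d1).resolve_left hdisc
    have d2' := (mul_eq_zero.mp d2).resolve_left hdisc
    refine Prod.ext (Prod.ext ?_ ?_) (Prod.ext ?_ ?_) <;> omega
  have hNp : N / p₀ ≤ L := by
    rw [div_le_iff₀ hp₀0]
    rw [div_le_iff₀ hL0] at hp₀pos
    linarith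
  have hFcard : ∀ r, ((F r).card : ℝ) ≤ 5 * L * h := by
    intro r
    have := rep_count (F r) T (fun e t => tf e = t) 1 (4 * L + 1) (by
      intro e he
      have : 0 < (T.filter (fun t => tf e = t)).card :=
        Finset.card_pos.mpr ⟨tf e, by simp [(hFmem r e he).2.2.2.2.1]⟩
      exact_mod_cast this) (by
      intro t _
      have hinj : Set.InjOn qf ((F r).filter (fun e => tf e = t)) := by
        intro e he e' he' hq
        simp only [Finset.coe_filter, Set.mem_ofPred_eq] at he he'
        exact hFinj r e he.1 e' he'.1 hq (he.2.trans he'.2.symm)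
      rw [← Finset.card_image_of_injOn hinj]
      apply card_le_of_diam _ _ (by positivity)
      intro x hx y hy
      obtain ⟨e, he, rfl⟩ := Finset.mem_image.mp hx
      obtain ⟨e', he', rfl⟩ := Finset.mem_image.mp hy
      have he := Finset.mem_filter.mp he
      have he' := Finset.mem_filter.mp he'
      have b1 := (hFmem r e he.1).2.2.2.2.2
      have b2 := (hFmem r e' he'.1).2.2.2.2.2
      rw [he.2] at b1
      rw [he'.2] at b2
      push_cast at b1 b2
      rw [abs_lt] at b1 b2
      have b3 : (p₀ : ℝ) * ((qf e : ℝ) - qf e') ≤ p₀ * (4 * (N / p₀)) := by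
        have : (p₀ : ℝ) * (4 * (N / p₀)) = 4 * N := by field_simp
        rw [this]
        linarith
      have b4 := le_of_mul_le_mul_left b3 hp₀0
      linarith)
    calc ((F r).card : ℝ) = (F r).card * 1 := by ring
      _ ≤ _ := this
      _ ≤ (5 * L) * h := by gcongr; linarith
  obtain ⟨η, hηd⟩ : ∃ η : ℝ, η = g ^ 2 / (2 * k * h ^ 2) := ⟨_, rfl⟩
  have hη : 0 < η := by rw [hηd]; positivity
  have hg2 : g ^ 2 = η * (2 * k * h ^ 2) := by
    have hk' := hk.ne'
    have hh' := hh.ne'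
    clear * - hηd hk' hh'
    rw [hηd]; field_simp
  let R := (B' + B').filter (fun r => η ≤ ((F r).card : ℝ))
  refine ⟨p₀, hp₀, hp₀pos, R, Finset.filter_subset _ _, ?_, ?_⟩
  · have s1 : E₀ ⊆ E₀.filter (fun e => e.1.2 + e.2.2 ∈ R) ∪ E₀.filter (fun e => e.1.2 + e.2.2 ∉ R) := by
      intro e he
      simp only [Finset.mem_union, Finset.mem_filter]
      tauto
    have s2 := (Finset.card_le_card s1).trans (Finset.card_union_le _ _)
    have s2' : (E₀.card : ℝ) ≤ (E₀.filter (fun e => e.1.2 + e.2.2 ∈ R)).card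
      + (E₀.filter (fun e => e.1.2 + e.2.2 ∉ R)).card := by exact_mod_cast s2
    have s3 := rep_count (E₀.filter (fun e => e.1.2 + e.2.2 ∈ R)) R
      (fun e r => e.1.2 + e.2.2 = r) 1 (5 * L * h) (by
        intro e he
        have : 0 < (R.filter (fun r => e.1.2 + e.2.2 = r)).card :=
          Finset.card_pos.mpr ⟨_, Finset.mem_filter.mpr ⟨(Finset.mem_filter.mp he).2, rfl⟩⟩
        exact_mod_cast this) (by
        intro r _
        refine le_trans ?_ (hFcard r)
        refine Nat.cast_le.mpr (Finset.card_le_card ?_)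
        intro e he
        simp only [Finset.mem_filter, F] at he ⊢
        exact ⟨he.1.1, he.2⟩)
    have s4 := rep_count (E₀.filter (fun e => e.1.2 + e.2.2 ∉ R)) (B' + B')
      (fun e r => e.1.2 + e.2.2 = r) 1 η (by
        intro e he
        have hm := hEmem e (Finset.mem_filter.mp (Finset.mem_filter.mp he).1).1
        have : 0 < ((B' + B').filter (fun r => e.1.2 + e.2.2 = r)).card :=
          Finset.card_pos.mpr ⟨_, Finset.mem_filter.mpr
            ⟨Finset.add_mem_add hm.2.1 hm.2.2.2.1, rfl⟩⟩
        exact_mod_cast this) (by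
        intro r hr
        by_cases hrR : r ∈ R
        · have : (E₀.filter (fun e => e.1.2 + e.2.2 ∉ R)).filter (fun e => e.1.2 + e.2.2 = r)
              = ∅ := by
            rw [Finset.filter_eq_empty_iff]
            intro e he h'
            apply (Finset.mem_filter.mp he).2
            rw [h']; exact hrR
          rw [this]
          simpa using hη.le
        · have hlt : ¬ (η ≤ ((F r).card : ℝ)) := fun h' =>
            hrR (Finset.mem_filter.mpr ⟨hr, h'⟩)
          refine le_trans ?_ (not_le.mp hlt).le
          refine Nat.cast_le.mpr (Finset.card_le_card ?_)
          intro e he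
          simp only [Finset.mem_filter, F] at he ⊢
          exact ⟨he.1.1, he.2⟩)
    have s5 : η * ((B' + B').card : ℝ) ≤ η * h := by gcongr
    have s6 : g ^ 2 / k / h ≤ E₀.card := by
      refine le_trans ?_ hEp
      gcongr
      rw [div_le_iff₀ hk, mul_comm]; exact hEc
    have s7 : g ^ 2 / k / h = 2 * (η * h) := by
      have hk' := hk.ne'
      have hh' := hh.ne'
      clear * - hg2 hk' hh'
      rw [hg2]; field_simp
    have s8 : η * h ≤ 5 * L * h * R.card := by linarith
    have s9 : g ^ 2 = η * h * (2 * k * h) := by rw [hg2]; ring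
    rw [s9]
    calc η * h * (2 * k * h) ≤ (5 * L * h * R.card) * (2 * k * h) := by gcongr
      _ = _ := by ring
  · intro r hr
    have hrη := (Finset.mem_filter.mp hr).2
    have := rep_count (((B' + B') ×ˢ (B' + B')).image
        (fun b => ⌊((p₀ * b.1 + r * b.2 : ℤ) : ℝ) / N⌋)) ((B' + B' + Q) ×ˢ (B' + B' + T))
        (fun w v => |(⌊((p₀ * v.1 + r * v.2 : ℤ) : ℝ) / N⌋ : ℤ) - w| ≤ 2) η 5 (by
        intro w hw
        obtain ⟨b, hb, rfl⟩ := Finset.mem_image.mp hw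
        have hb := Finset.mem_product.mp hb
        refine hrη.trans ?_
        refine Nat.cast_le.mpr ?_
        apply Finset.card_le_card_of_injOn (fun e => (b.1 + qf e, b.2 + tf e))
        · intro e he
          obtain ⟨_, _, _, c1, c2, c3⟩ := hFmem r e he
          simp only [Finset.coe_filter, Set.mem_ofPred_eq, Finset.mem_product]
          refine ⟨⟨Finset.add_mem_add hb.1 c1, Finset.add_mem_add hb.2 c2⟩, ?_⟩
          have e1 : ((p₀ * (b.1 + qf e) + r * (b.2 + tf e) : ℤ) : ℝ) / N
            = ((p₀ * b.1 + r * b.2 : ℤ) : ℝ) / N + ((p₀ * qf e + r * tf e : ℤ) : ℝ) / N := by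
            rw [← add_div]; push_cast; ring
          rw [e1]
          have e2 : |((p₀ * qf e + r * tf e : ℤ) : ℝ) / N| < 2 := by
            rw [abs_div, abs_of_pos hN0, div_lt_iff₀ hN0]; exact c3
          generalize ((p₀ * b.1 + r * b.2 : ℤ) : ℝ) / N = X at *
          generalize ((p₀ * qf e + r * tf e : ℤ) : ℝ) / N = Y at *
          rw [abs_lt] at e2
          have f1 := Int.floor_le X
          have f2 := Int.lt_floor_add_one X
          have f3 := Int.floor_le (X + Y)
          have f4 := Int.lt_floor_add_one (X + Y)
          have u1 : (⌊X + Y⌋ : ℝ) - ⌊X⌋ < 3 := by linarith [e2.2]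
          have u2 : (-3 : ℝ) < (⌊X + Y⌋ : ℝ) - ⌊X⌋ := by linarith [e2.1]
          have u1' : ⌊X + Y⌋ - ⌊X⌋ < 3 := by exact_mod_cast u1
          have u2' : -3 < ⌊X + Y⌋ - ⌊X⌋ := by exact_mod_cast u2
          rw [abs_le]; omega
        · intro e he e' he' hq
          have := Prod.mk.inj hq
          exact hFinj r e he e' he' (by linarith [this.1]) (by linarith [this.2])) (by
        intro v _
        refine (card_le_of_diam _ 4 (by norm_num) ?_).trans (by norm_num)
        intro x hx y hy
        have hx := abs_le.mp (Finset.mem_filter.mp hx).2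
        have hy := abs_le.mp (Finset.mem_filter.mp hy).2
        have : x - y ≤ 4 := by omega
        exact_mod_cast this)
    rw [Finset.card_product] at this
    push_cast at this ⊢
    have s1 : ((B' + B' + Q).card : ℝ) * (B' + B' + T).card ≤ h * h := mul_le_mul h4 h5 (Nat.cast_nonneg _) hh.le
    have s9 := hg2
    have hkk : 0 ≤ 2 * k * h ^ 2 := by clear * - hk hh; positivity
    rw [s9, ← mul_assoc]
    clear * - this s1 hkk
    refine (mul_le_mul_of_nonneg_right (this.trans (mul_le_mul_of_nonneg_left s1 (by norm_num : (0:ℝ) ≤ 5))) hkk).trans ?_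
    apply le_of_eq; ring

end CSP

namespace CSP
open scoped Classical Pointwise

noncomputable def DD (N : ℝ) (B : Finset ℤ) (r : ℤ) : Finset ℤ :=
  B.image (fun b => ⌊((r * b : ℤ) : ℝ) / N⌋)

structure Setup (s N K : ℝ) (p₀ : ℤ) (R B : Finset ℤ) : Prop where
  s0 : 0 < s
  s1 : s < 1
  N1 : 1 ≤ N
  K10 : 10 ≤ K
  p0 : N ≤ K * p₀
  RB : R ⊆ B
  R0 : ∀ r : ℤ, r ∈ R → (0 : ℝ) ≤ r
  R2 : ∀ r : ℤ, r ∈ R → (r : ℝ) ≤ 2 * N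
  card : N ^ s ≤ K * R.card
  frost : ∀ x l : ℝ, 1 ≤ l →
    ((R.filter (fun t : ℤ => x ≤ t ∧ (t : ℝ) ≤ x + l)).card : ℝ) ≤ K * l ^ s
  dil : ∀ r ∈ insert p₀ R, ((DD N B p₀ + DD N B r).card : ℝ) ≤ K * N ^ s

lemma mem_six {U : Finset ℤ} {a b c d e f : ℤ} (ha : a ∈ U) (hb : b ∈ U) (hc : c ∈ U)
    (hd : d ∈ U) (he : e ∈ U) (hf : f ∈ U) : a + b + c + d + e + f ∈ 6 • U := by
  have : 6 • U = U + U + U + U + U + U := by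
    simp only [show (6 : ℕ) = 0 + 1 + 1 + 1 + 1 + 1 + 1 from rfl, succ_nsmul, zero_nsmul, zero_add]
  rw [this]
  exact Finset.add_mem_add (Finset.add_mem_add (Finset.add_mem_add (Finset.add_mem_add
    (Finset.add_mem_add ha hb) hc) hd) he) hf

lemma Setup.six {s N K : ℝ} {p₀ : ℤ} {R B : Finset ℤ} (S : Setup s N K p₀ R B) {a b c d : ℤ}
    (ha : a ∈ R) (hb : b ∈ R) (hc : c ∈ R) (hd : d ∈ R) :
    ∃ U : Finset ℤ, 0 ∈ U ∧ DD N B p₀ ⊆ U ∧ DD N B a ⊆ U ∧ DD N B b ⊆ U ∧ DD N B c ⊆ U ∧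
      DD N B d ⊆ U ∧ ((6 • U - 6 • U).card : ℝ) ≤ K ^ 61 * N ^ s := by
  have hN0 : 0 < N := by linarith [S.N1]
  have hK0 : 0 < K := by linarith [S.K10]
  have hK10 := S.K10
  have hNs : 0 < N ^ s := Real.rpow_pos_of_pos hN0 s
  have hp0 : (0 : ℝ) < p₀ := by
    by_contra h
    have := mul_nonpos_of_nonneg_of_nonpos hK0.le (not_lt.mp h)
    linarith [S.p0]
  set D := DD N B p₀ with hDdef
  have hB : (B.card : ℝ) ≤ (K + 1) * D.card := by
    have := rep_count B D (fun b v => ⌊((p₀ * b : ℤ) : ℝ) / N⌋ = v) 1 (K + 1) (by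
      intro b hb
      have : 0 < (D.filter (fun v => ⌊((p₀ * b : ℤ) : ℝ) / N⌋ = v)).card :=
        Finset.card_pos.mpr ⟨_, Finset.mem_filter.mpr ⟨Finset.mem_image_of_mem _ hb, rfl⟩⟩
      exact_mod_cast this) (by
      intro v _
      apply card_le_of_diam _ _ hK0.le
      intro x hx y hy
      have hx := (Finset.mem_filter.mp hx).2
      have hy := (Finset.mem_filter.mp hy).2
      have h := (abs_lt.mp (floor_eq_abs hN0 (hx.trans hy.symm))).2
      push_cast at h
      have h2 : (p₀ : ℝ) * ((x : ℝ) - y) ≤ p₀ * K := by linarith [S.p0]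
      exact le_of_mul_le_mul_left h2 hp0)
    linarith
  have hRB : (R.card : ℝ) ≤ B.card := by exact_mod_cast Finset.card_le_card S.RB
  have hD : N ^ s ≤ K * ((K + 1) * D.card) :=
    S.card.trans (mul_le_mul_of_nonneg_left (hRB.trans hB) hK0.le)
  have hDpos : (0 : ℝ) < D.card := by
    by_contra h
    have h0 : (D.card : ℝ) = 0 := le_antisymm (not_lt.mp h) (Nat.cast_nonneg _)
    rw [h0] at hD
    simp at hD
    linarith
  have hDne : D.Nonempty := by rw [← Finset.card_pos]; exact_mod_cast hDpos
  have dp := S.dil p₀ (Finset.mem_insert_self _ _)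
  have da := S.dil a (Finset.mem_insert_of_mem ha)
  have db := S.dil b (Finset.mem_insert_of_mem hb)
  have dc := S.dil c (Finset.mem_insert_of_mem hc)
  have dd := S.dil d (Finset.mem_insert_of_mem hd)
  rw [← hDdef] at dp da db dc dd
  have hDle : (D.card : ℝ) ≤ K * N ^ s := by
    refine le_trans ?_ dp
    exact_mod_cast Finset.card_le_card_add_right hDne
  refine ⟨{0} ∪ (D ∪ (DD N B a ∪ (DD N B b ∪ (DD N B c ∪ DD N B d)))), by simp,
    ?_, ?_, ?_, ?_, ?_, ?_⟩
  iterate 5 (intro x hx; simp [hx])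
  set U := {0} ∪ (D ∪ (DD N B a ∪ (DD N B b ∪ (DD N B c ∪ DD N B d)))) with hU
  have hadd : ((D + U).card : ℝ) ≤ 6 * (K * N ^ s) := by
    have e : D + U = (D + {0}) ∪ ((D + D) ∪ ((D + DD N B a) ∪ ((D + DD N B b) ∪
      ((D + DD N B c) ∪ (D + DD N B d))))) := by
      rw [hU]; simp only [Finset.add_union]
    have h0 : (D + {0}).card = D.card := by simp
    have : (D + U).card ≤ (D + {0}).card + ((D + D).card + ((D + DD N B a).card +
      ((D + DD N B b).card + ((D + DD N B c).card + (D + DD N B d).card)))) := by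
      rw [e]
      refine (Finset.card_union_le _ _).trans (Nat.add_le_add_left ?_ _)
      refine (Finset.card_union_le _ _).trans (Nat.add_le_add_left ?_ _)
      refine (Finset.card_union_le _ _).trans (Nat.add_le_add_left ?_ _)
      refine (Finset.card_union_le _ _).trans (Nat.add_le_add_left ?_ _)
      exact Finset.card_union_le _ _
    rw [h0] at this
    have h' : ((D + U).card : ℝ) ≤ (D.card : ℝ) + ((D + D).card + ((D + DD N B a).card +
      ((D + DD N B b).card + ((D + DD N B c).card + (D + DD N B d).card)))) := by
      exact_mod_cast this
    linarith
  have hadd' : ((D + U).card : ℝ) ≤ K ^ 5 * D.card := by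
    have h1 : 6 * (K * N ^ s) ≤ 6 * (K * (K * ((K + 1) * D.card))) := by gcongr
    have h2 : 6 * (K * (K * ((K + 1) * (D.card : ℝ)))) ≤ K ^ 5 * D.card := by
      have : 6 * (K * (K * (K + 1))) ≤ K ^ 5 := by
        have a1 : 6 * (K + 1) ≤ K ^ 3 := by nlinarith [sq_nonneg K]
        calc 6 * (K * (K * (K + 1))) = K ^ 2 * (6 * (K + 1)) := by ring
          _ ≤ K ^ 2 * K ^ 3 := by gcongr
          _ = _ := by ring
      calc _ = 6 * (K * (K * (K + 1))) * (D.card : ℝ) := by ring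
        _ ≤ _ := by gcongr
    linarith
  have := plr D U hDne 6 (K ^ 5) hadd'
  calc _ ≤ _ := this
    _ ≤ (K ^ 5) ^ (2 * 6) * (K * N ^ s) := by gcongr
    _ = _ := by ring

end CSP

namespace CSP
open scoped Classical Pointwise

noncomputable def fl (N : ℝ) (r x : ℤ) : ℤ := ⌊((r * x : ℤ) : ℝ) / N⌋

lemma fl_le {N : ℝ} (hN : 0 < N) (r x : ℤ) : N * (fl N r x : ℝ) ≤ (r : ℝ) * x := by
  have := Int.floor_le (((r * x : ℤ) : ℝ) / N)
  rw [le_div_iff₀ hN] at this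
  push_cast at this
  unfold fl
  push_cast
  linarith

lemma lt_fl {N : ℝ} (hN : 0 < N) (r x : ℤ) : (r : ℝ) * x < N * (fl N r x : ℝ) + N := by
  have := Int.lt_floor_add_one (((r * x : ℤ) : ℝ) / N)
  rw [div_lt_iff₀ hN] at this
  push_cast at this
  unfold fl
  push_cast
  linarith

lemma fl_mem {N : ℝ} {B : Finset ℤ} (r : ℤ) {x : ℤ} (hx : x ∈ B) : fl N r x ∈ DD N B r :=
  Finset.mem_image_of_mem _ hx

lemma Setup.sep {s N K : ℝ} {p₀ : ℤ} {R B : Finset ℤ} (S : Setup s N K p₀ R B) (d : ℝ)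
    (hd : 1 ≤ 2 * d) : ∃ Z ⊆ R, (∀ z : ℤ, z ∈ Z → ∀ z' : ℤ, z' ∈ Z → z ≠ z' →
      d < |(z : ℝ) - (z' : ℝ)|) ∧ (R.card : ℝ) ≤ K * (2 * d) ^ s * Z.card :=
  exists_sep R d _ (by linarith) (fun x => S.frost x (2 * d) hd)

lemma rpow_mul_le {s a b : ℝ} (hs1 : s < 1) (ha : 1 ≤ a) (hb : 0 ≤ b) :
    (a * b) ^ s ≤ a * b ^ s := by
  rw [Real.mul_rpow (by linarith) hb]
  have : a ^ s ≤ a ^ (1 : ℝ) := Real.rpow_le_rpow_of_exponent_le ha hs1.le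
  rw [Real.rpow_one] at this
  gcongr

set_option maxHeartbeats 2000000 in
lemma Setup.gap {s N K : ℝ} {p₀ : ℤ} {R B : Finset ℤ} (S : Setup s N K p₀ R B) (W ρ : ℝ)
    (hW : 1 ≤ W) (hWρ : 9 * N ≤ 2 * ρ * W ^ 2) {a b c d : ℤ}
    (ha : a ∈ R) (hb : b ∈ R) (hc : c ∈ R) (hd : d ∈ R)
    (hμ : W ≤ (c : ℝ) - d) (hν : |(a : ℝ) - b| ≤ 2 * ((c : ℝ) - d)) (β : ℤ) (hβ : β = 0 ∨ β = 1)
    (hgap : ∀ a' b' c' d' : ℤ, a' ∈ R → b' ∈ R → c' ∈ R → d' ∈ R → W ≤ (c' : ℝ) - d' →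
      ρ < |(((a : ℝ) - b) + β * ((c : ℝ) - d)) / (2 * ((c : ℝ) - d))
        - ((a' : ℝ) - b') / ((c' : ℝ) - d')|) :
    N ^ s ≤ K ^ 71 * W ^ s := by
  obtain ⟨U, hU0, hUp, hUa, hUb, hUc, hUd, hUcard⟩ := S.six ha hb hc hd
  have hN0 : 0 < N := by linarith [S.N1]
  have hN1 := S.N1
  have hK0 : 0 < K := by linarith [S.K10]
  have hK10 := S.K10
  have hNs : 0 < N ^ s := Real.rpow_pos_of_pos hN0 s
  have hp0 : (0 : ℝ) < p₀ := by
    by_contra h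
    have := mul_nonpos_of_nonneg_of_nonpos hK0.le (not_lt.mp h)
    linarith [S.p0]
  obtain ⟨μ, hμd⟩ : ∃ μ : ℝ, μ = (c : ℝ) - d := ⟨_, rfl⟩
  obtain ⟨ν, hνd⟩ : ∃ ν : ℝ, ν = (a : ℝ) - b := ⟨_, rfl⟩
  rw [← hμd] at hμ hν hgap
  rw [← hνd] at hν hgap
  have hμ1 : 1 ≤ μ := by linarith
  have hμ0 : 0 < μ := by linarith
  have hμ2 : μ ≤ 2 * N := by
    have := S.R2 c hc
    have := S.R0 d hd
    linarith
  obtain ⟨Z, hZR, hZsep, hZc⟩ := S.sep (19 * K * μ) (by nlinarith)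
  obtain ⟨Y, hYR, hYsep, hYc⟩ := S.sep W (by linarith)
  obtain ⟨X, hXR, hXsep, hXc⟩ := S.sep (5 * N / μ) (by
    rw [mul_div_assoc', le_div_iff₀ hμ0]; linarith)
  let g : ℤ × ℤ × ℤ → ℤ := fun v =>
    (fl N c v.1 + fl N c v.1 + fl N a v.2.1 + β * fl N c v.2.1 + fl N p₀ v.2.2 + 0)
    - (fl N d v.1 + fl N d v.1 + fl N b v.2.1 + β * fl N d v.2.1 + 0 + 0)
  have hmaps : ∀ v ∈ X ×ˢ Y ×ˢ Z, g v ∈ 6 • U - 6 • U := by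
    intro v hv
    simp only [Finset.mem_product] at hv
    have m1 := S.RB (hXR hv.1)
    have m2 := S.RB (hYR hv.2.1)
    have m3 := S.RB (hZR hv.2.2)
    have hβm : ∀ u ∈ U, β * u ∈ U := by
      intro u hu
      rcases hβ with h | h
      · rw [h, zero_mul]; exact hU0
      · rw [h, one_mul]; exact hu
    exact Finset.sub_mem_sub
      (mem_six (hUc (fl_mem c m1)) (hUc (fl_mem c m1)) (hUa (fl_mem a m2))
        (hβm _ (hUc (fl_mem c m2))) (hUp (fl_mem p₀ m3)) hU0)
      (mem_six (hUd (fl_mem d m1)) (hUd (fl_mem d m1)) (hUb (fl_mem b m2))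
        (hβm _ (hUd (fl_mem d m2))) hU0 hU0)
  have hinj : Set.InjOn g (X ×ˢ Y ×ˢ Z : Finset (ℤ × ℤ × ℤ)) := by
    rintro ⟨x, y, z⟩ hv ⟨x', y', z'⟩ hv' hg
    simp only [Finset.coe_product, Set.mem_prod, Finset.mem_coe] at hv hv'
    obtain ⟨hx, hy, hz⟩ := hv
    obtain ⟨hx', hy', hz'⟩ := hv'
    have hβ01 : (β : ℝ) = 0 ∨ (β : ℝ) = 1 := by
      rcases hβ with h | h <;> rw [h] <;> simp
    have hmain : |2 * μ * ((x : ℝ) - x') + (ν + β * μ) * ((y : ℝ) - y') + p₀ * ((z : ℝ) - z')|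
        < 9 * N := by
      have hg' : (g (x, y, z) : ℝ) = g (x', y', z') := by rw [hg]
      simp only [g] at hg'
      push_cast at hg'
      rw [hμd, hνd]
      have hgN : N * ((fl N c x + fl N c x + fl N a y + β * fl N c y + fl N p₀ z + 0 : ℝ)
          - (fl N d x + fl N d x + fl N b y + β * fl N d y + 0 + 0)) =
          N * ((fl N c x' + fl N c x' + fl N a y' + β * fl N c y' + fl N p₀ z' + 0 : ℝ)
          - (fl N d x' + fl N d x' + fl N b y' + β * fl N d y' + 0 + 0)) := by rw [hg']
      have := fl_le hN0 c x
      have := lt_fl hN0 c x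
      have := fl_le hN0 d x
      have := lt_fl hN0 d x
      have := fl_le hN0 a y
      have := lt_fl hN0 a y
      have := fl_le hN0 b y
      have := lt_fl hN0 b y
      have := fl_le hN0 c y
      have := lt_fl hN0 c y
      have := fl_le hN0 d y
      have := lt_fl hN0 d y
      have := fl_le hN0 p₀ z
      have := lt_fl hN0 p₀ z
      have := fl_le hN0 c x'
      have := lt_fl hN0 c x'
      have := fl_le hN0 d x'
      have := lt_fl hN0 d x'
      have := fl_le hN0 a y'
      have := lt_fl hN0 a y'
      have := fl_le hN0 b y'
      have := lt_fl hN0 b y'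
      have := fl_le hN0 c y'
      have := lt_fl hN0 c y'
      have := fl_le hN0 d y'
      have := lt_fl hN0 d y'
      have := fl_le hN0 p₀ z'
      have := lt_fl hN0 p₀ z'
      clear hgap hmaps
      rw [abs_lt]
      rcases hβ01 with h | h <;> rw [h] at hgN ⊢ <;> constructor <;> linarith
    have hβμ : |ν + β * μ| ≤ 3 * μ := by
      have h1 := abs_le.mp hν
      rw [abs_le]
      rcases hβ01 with h | h <;> rw [h] <;> constructor <;> linarith [h1.1, h1.2]
    have bx : |(x : ℝ) - x'| ≤ 2 * N := by
      have := S.R0 x (hXR hx); have := S.R2 x (hXR hx)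
      have := S.R0 x' (hXR hx'); have := S.R2 x' (hXR hx')
      rw [abs_le]; constructor <;> linarith
    have by' : |(y : ℝ) - y'| ≤ 2 * N := by
      have := S.R0 y (hYR hy); have := S.R2 y (hYR hy)
      have := S.R0 y' (hYR hy'); have := S.R2 y' (hYR hy')
      rw [abs_le]; constructor <;> linarith
    have hzz : z = z' := by
      by_contra hne
      have h1 := hZsep z hz z' hz' hne
      have h2 : |p₀ * ((z : ℝ) - z')| = p₀ * |(z : ℝ) - z'| := by
        rw [abs_mul, abs_of_pos hp0]
      have h3 : (p₀ : ℝ) * (19 * K * μ) < p₀ * |(z : ℝ) - z'| := by gcongr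
      have h4 : 19 * μ * N ≤ (p₀ : ℝ) * (19 * K * μ) := by
        have := mul_le_mul_of_nonneg_left S.p0 (by positivity : 0 ≤ 19 * μ)
        linarith
      have h5 : |2 * μ * ((x : ℝ) - x')| ≤ 2 * μ * (2 * N) := by
        rw [abs_mul, abs_of_pos (by positivity : 0 < 2 * μ)]; gcongr
      have h6 : |(ν + β * μ) * ((y : ℝ) - y')| ≤ 3 * μ * (2 * N) := by
        rw [abs_mul]; gcongr
      have h7 : |p₀ * ((z : ℝ) - z')| ≤
          |2 * μ * ((x : ℝ) - x') + (ν + β * μ) * ((y : ℝ) - y') + p₀ * ((z : ℝ) - z')|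
          + (|2 * μ * ((x : ℝ) - x')| + |(ν + β * μ) * ((y : ℝ) - y')|) := by
        have e : p₀ * ((z : ℝ) - z') =
          (2 * μ * ((x : ℝ) - x') + (ν + β * μ) * ((y : ℝ) - y') + p₀ * ((z : ℝ) - z'))
          - (2 * μ * ((x : ℝ) - x') + (ν + β * μ) * ((y : ℝ) - y')) := by ring
        rw [e]
        refine (abs_sub _ _).trans ?_
        rw [← e]
        gcongr
        exact abs_add_le _ _
      have h8 : N ≤ μ * N := by nlinarith
      linarith
    subst hzz
    rw [sub_self, mul_zero, add_zero] at hmain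
    have hyy : y = y' := by
      by_contra hne
      have h1 := hYsep y hy y' hy' hne
      have hfact : |2 * μ * ((y : ℝ) - y')| * |(ν + β * μ) / (2 * μ) + ((x : ℝ) - x') / ((y : ℝ) - y')|
          < 9 * N := by
        rw [← abs_mul]
        have hne' : (y : ℝ) - y' ≠ 0 := by
          intro h; rw [h, abs_zero] at h1; linarith
        have : 2 * μ * ((y : ℝ) - y') * ((ν + β * μ) / (2 * μ) + ((x : ℝ) - x') / ((y : ℝ) - y'))
          = 2 * μ * ((x : ℝ) - x') + (ν + β * μ) * ((y : ℝ) - y') := by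
          field_simp; ring
        rw [this]; exact hmain
      have hq : ρ < |(ν + β * μ) / (2 * μ) + ((x : ℝ) - x') / ((y : ℝ) - y')| := by
        rcases le_total ((y : ℝ) - y') 0 with hs | hs
        · rw [abs_of_nonpos hs] at h1
          have := hgap x x' y' y (hXR hx) (hXR hx') (hYR hy') (hYR hy) (by linarith)
          rw [← neg_sub (y : ℝ) y', div_neg, sub_neg_eq_add] at this
          exact this
        · rw [abs_of_nonneg hs] at h1
          have := hgap x' x y y' (hXR hx') (hXR hx) (hYR hy) (hYR hy') (by linarith)
          rw [← neg_sub (x : ℝ) x', neg_div, sub_neg_eq_add] at this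
          exact this
      have hρ0 : 0 < ρ := by
        by_contra h
        have : 2 * ρ * W ^ 2 ≤ 0 := mul_nonpos_of_nonpos_of_nonneg (by linarith) (by positivity)
        linarith
      have h3 : 2 * W * W ≤ |2 * μ * ((y : ℝ) - y')| := by
        rw [abs_mul, abs_of_pos (by positivity : 0 < 2 * μ)]
        gcongr
      have h4 : 2 * W * W * ρ ≤ |2 * μ * ((y : ℝ) - y')| *
          |(ν + β * μ) / (2 * μ) + ((x : ℝ) - x') / ((y : ℝ) - y')| := by gcongr
      linarith
    subst hyy
    rw [sub_self, mul_zero, add_zero] at hmain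
    have hxx : x = x' := by
      by_contra hne
      have h1 := hXsep x hx x' hx' hne
      rw [div_lt_iff₀ hμ0] at h1
      rw [abs_mul, abs_of_pos (by positivity : 0 < 2 * μ)] at hmain
      linarith
    rw [hxx]
  have hcount : (X.card : ℝ) * (Y.card * Z.card) ≤ K ^ 61 * N ^ s := by
    refine le_trans ?_ hUcard
    have := Finset.card_le_card_of_injOn g hmaps hinj
    rw [Finset.card_product, Finset.card_product] at this
    exact_mod_cast this
  clear hgap hinj hmaps
  have hs1 := S.s1
  have hWs : 0 < W ^ s := Real.rpow_pos_of_pos (by linarith) s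
  have cZ : (R.card : ℝ) ≤ K * (38 * K * μ ^ s) * Z.card := by
    refine hZc.trans ?_
    have : (2 * (19 * K * μ)) ^ s ≤ 38 * K * μ ^ s := by
      rw [show 2 * (19 * K * μ) = (38 * K) * μ by ring]
      exact rpow_mul_le hs1 (by linarith) hμ0.le
    gcongr
  have cY : (R.card : ℝ) ≤ K * (2 * W ^ s) * Y.card := by
    refine hYc.trans ?_
    have : (2 * W) ^ s ≤ 2 * W ^ s := rpow_mul_le hs1 (by norm_num) (by linarith)
    gcongr
  have cX : (R.card : ℝ) ≤ K * (10 * (N ^ s / μ ^ s)) * X.card := by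
    refine hXc.trans ?_
    have : (2 * (5 * N / μ)) ^ s ≤ 10 * (N ^ s / μ ^ s) := by
      rw [show 2 * (5 * N / μ) = 10 * (N / μ) by ring, ← Real.div_rpow hN0.le hμ0.le]
      exact rpow_mul_le hs1 (by norm_num) (by positivity)
    gcongr
  have hμs : 0 < μ ^ s := Real.rpow_pos_of_pos hμ0 s
  have hcard := S.card
  generalize N ^ s = n at *
  have h1 : (R.card : ℝ) * (R.card * R.card) ≤ (K * (10 * (n / μ ^ s)) * X.card) *
    ((K * (2 * W ^ s) * Y.card) * (K * (38 * K * μ ^ s) * Z.card)) := by gcongr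
  have h2 : (K * (10 * (n / μ ^ s)) * X.card) *
    ((K * (2 * W ^ s) * Y.card) * (K * (38 * K * μ ^ s) * Z.card))
    = 760 * K ^ 4 * n * W ^ s * (X.card * (Y.card * Z.card)) := by
    field_simp; ring
  have h3 : n * (n * n) ≤ (K * R.card) * ((K * R.card) * (K * R.card)) := by gcongr
  have h4 : 760 * K ^ 4 * n * W ^ s * ((X.card : ℝ) * (Y.card * Z.card))
      ≤ 760 * K ^ 4 * n * W ^ s * (K ^ 61 * n) := by gcongr
  have h5 : K ^ 3 * ((R.card : ℝ) * (R.card * R.card)) ≤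
      K ^ 3 * (760 * K ^ 4 * n * W ^ s * (K ^ 61 * n)) := by
    exact mul_le_mul_of_nonneg_left ((h1.trans h2.le).trans h4) (by positivity)
  have h6 : (n * n) * n ≤ (n * n) * (760 * K ^ 68 * W ^ s) := by
    calc (n * n) * n = n * (n * n) := by ring
      _ ≤ _ := h3
      _ = K ^ 3 * ((R.card : ℝ) * (R.card * R.card)) := by ring
      _ ≤ _ := h5
      _ = _ := by ring
  have h7 := le_of_mul_le_mul_left h6 (by positivity)
  have h8 : (760 : ℝ) ≤ K ^ 3 := by
    calc (760 : ℝ) ≤ 10 ^ 3 := by norm_num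
      _ ≤ _ := by gcongr
  calc n ≤ _ := h7
    _ ≤ K ^ 3 * K ^ 68 * W ^ s := by gcongr
    _ = _ := by ring

end CSP

namespace CSP
open scoped Classical Pointwise

lemma dense_aux (Q : Set ℝ) (ρ : ℝ) (hρ : 0 ≤ ρ) (hρ2 : ρ ≤ 1 / 2) (h0 : (0 : ℝ) ∈ Q)
    (h : ∀ q ∈ Q, |q| ≤ 2 → ∀ β : ℤ, β = 0 ∨ β = 1 → ∃ q' ∈ Q, |(q + β) / 2 - q'| ≤ ρ) (n : ℕ) :
    ∀ x : ℝ, 0 ≤ x → x ≤ 1 → ∃ q ∈ Q, |q| ≤ 2 ∧ |q - x| ≤ 2 * ρ + (1 / 2) ^ n := by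
  induction n with
  | zero =>
    intro x h1 h2
    refine ⟨0, h0, by simp, ?_⟩
    rw [zero_sub, abs_neg, abs_of_nonneg h1, pow_zero]
    linarith
  | succ n ih =>
    intro x h1 h2
    obtain ⟨β, hβ, hx0, hx1⟩ : ∃ β : ℤ, (β = 0 ∨ β = 1) ∧ 0 ≤ 2 * x - β ∧ 2 * x - β ≤ 1 := by
      rcases le_total x (1 / 2) with hx | hx
      · exact ⟨0, Or.inl rfl, by push_cast; linarith, by push_cast; linarith⟩
      · exact ⟨1, Or.inr rfl, by push_cast; linarith, by push_cast; linarith⟩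
    obtain ⟨q, hq, hq2, hqx⟩ := ih (2 * x - β) hx0 hx1
    obtain ⟨q', hq', hd⟩ := h q hq hq2 β hβ
    have hβ01 : (β : ℝ) = 0 ∨ (β : ℝ) = 1 := by
      rcases hβ with h | h <;> rw [h] <;> simp
    rw [abs_le] at hq2 hqx hd
    refine ⟨q', hq', ?_, ?_⟩
    · rw [abs_le]
      rcases hβ01 with h | h <;> rw [h] at hd <;> constructor <;> linarith [hd.1, hd.2]
    · rw [abs_le, pow_succ]
      constructor <;> linarith [hd.1, hd.2, hqx.1, hqx.2]

set_option maxHeartbeats 1000000 in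
lemma Setup.dense {s N K : ℝ} {p₀ : ℤ} {R B : Finset ℤ} (S : Setup s N K p₀ R B) (W ρ t : ℝ)
    (hW : 0 < W) (hρ : 0 < ρ) (ht : 0 < t) (ht1 : t ≤ 1) (hWρ : 4 * N ≤ ρ * N * W)
    (htN : 1 ≤ 2 * (t * N)) (hρN : 1 ≤ 2 * (ρ * N))
    (hd : ∀ x : ℝ, 0 ≤ x → x ≤ 1 → ∃ a b c d : ℤ, a ∈ R ∧ b ∈ R ∧ c ∈ R ∧ d ∈ R ∧
      W ≤ (c : ℝ) - d ∧ |((a : ℝ) - b) / ((c : ℝ) - d) - x| ≤ 3 * ρ) :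
    1 ≤ K ^ 61 * N ^ s * (4 * K ^ 4 * (t * ρ) ^ s + 24 * (ρ / t)) := by
  have hN0 : 0 < N := by linarith [S.N1]
  have hN1 := S.N1
  have hK0 : 0 < K := by linarith [S.K10]
  have hK10 := S.K10
  have hNs : 0 < N ^ s := Real.rpow_pos_of_pos hN0 s
  obtain ⟨n₀, hn₀⟩ : ∃ n₀ : ℕ, n₀ = ⌊1 / (8 * ρ)⌋₊ + 1 := ⟨_, rfl⟩
  have hn₀pos : 1 / (8 * ρ) ≤ (n₀ : ℝ) := by
    rw [hn₀]; push_cast; exact (Nat.lt_floor_add_one _).le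
  have hk1 : ∀ k : ℕ, k < n₀ → 8 * k * ρ ≤ 1 := by
    intro k hk
    have h1 : k ≤ ⌊1 / (8 * ρ)⌋₊ := by omega
    have h2 : (k : ℝ) ≤ 1 / (8 * ρ) := (Nat.cast_le.mpr h1).trans (Nat.floor_le (by positivity))
    rw [le_div_iff₀ (by positivity)] at h2
    linarith
  have hd' : ∀ k : ℕ, ∃ l : ℝ, k < n₀ → |l - 8 * k * ρ| ≤ 3 * ρ ∧
      (R.card : ℝ) ^ 4 ≤ K ^ 61 * N ^ s * ((((R ×ˢ R) ×ˢ (R ×ˢ R)).filter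
        (fun p => |((p.1.1 : ℝ) - p.2.1) + l * ((p.1.2 : ℝ) - p.2.2)| ≤ ρ * N)).card : ℝ) := by
    intro k
    by_cases hk : k < n₀
    swap
    · exact ⟨0, fun h => absurd h hk⟩
    obtain ⟨a, b, c, d, ha, hb, hc, hd, hcd, hx⟩ := hd (8 * k * ρ) (by positivity) (hk1 k hk)
    refine ⟨_, fun _ => ⟨hx, ?_⟩⟩
    obtain ⟨U, hU0, hUp, hUa, hUb, hUc, hUd, hUcard⟩ := S.six ha hb hc hd
    let g : ℤ × ℤ → ℤ := fun v =>
      (fl N c v.1 + fl N a v.2 + 0 + 0 + 0 + 0) - (fl N d v.1 + fl N b v.2 + 0 + 0 + 0 + 0)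
    have himg : (((R ×ˢ R).image g).card : ℝ) ≤ K ^ 61 * N ^ s := by
      refine le_trans (Nat.cast_le.mpr (Finset.card_le_card ?_)) hUcard
      intro w hw
      obtain ⟨v, hv, rfl⟩ := Finset.mem_image.mp hw
      simp only [Finset.mem_product] at hv
      have m1 := S.RB hv.1
      have m2 := S.RB hv.2
      exact Finset.sub_mem_sub
        (mem_six (hUc (fl_mem c m1)) (hUa (fl_mem a m2)) hU0 hU0 hU0 hU0)
        (mem_six (hUd (fl_mem d m1)) (hUb (fl_mem b m2)) hU0 hU0 hU0 hU0)
    have hcol := collisions (R ×ˢ R) g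
    rw [Finset.card_product] at hcol
    push_cast at hcol
    calc (R.card : ℝ) ^ 4 = ((R.card : ℝ) * R.card) ^ 2 := by ring
      _ ≤ _ := hcol
      _ ≤ (K ^ 61 * N ^ s) * (((((R ×ˢ R) ×ˢ (R ×ˢ R))).filter
          (fun p => g p.1 = g p.2)).card : ℝ) := by gcongr
      _ ≤ _ := by
        refine mul_le_mul_of_nonneg_left (Nat.cast_le.mpr (Finset.card_le_card ?_)) (by positivity)
        rintro ⟨⟨x, y⟩, ⟨x', y'⟩⟩ hp
        have hp := Finset.mem_filter.mp hp
        refine Finset.mem_filter.mpr ⟨hp.1, ?_⟩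
        have hg' : (g (x, y) : ℝ) = g (x', y') := by rw [hp.2]
        simp only [g] at hg' ⊢
        push_cast at hg'
        have hgN : N * ((fl N c x + fl N a y + 0 + 0 + 0 + 0 : ℝ)
            - (fl N d x + fl N b y + 0 + 0 + 0 + 0)) =
            N * ((fl N c x' + fl N a y' + 0 + 0 + 0 + 0 : ℝ)
            - (fl N d x' + fl N b y' + 0 + 0 + 0 + 0)) := by rw [hg']
        have hcd0 : 0 < (c : ℝ) - d := by linarith
        have hmain : |((c : ℝ) - d) * ((x : ℝ) - x') + ((a : ℝ) - b) * ((y : ℝ) - y')| < 4 * N := by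
          have := fl_le hN0 c x
          have := lt_fl hN0 c x
          have := fl_le hN0 d x
          have := lt_fl hN0 d x
          have := fl_le hN0 a y
          have := lt_fl hN0 a y
          have := fl_le hN0 b y
          have := lt_fl hN0 b y
          have := fl_le hN0 c x'
          have := lt_fl hN0 c x'
          have := fl_le hN0 d x'
          have := lt_fl hN0 d x'
          have := fl_le hN0 a y'
          have := lt_fl hN0 a y'
          have := fl_le hN0 b y'
          have := lt_fl hN0 b y'
          rw [abs_lt]
          constructor <;> linarith
        have e : ((c : ℝ) - d) * ((x : ℝ) - x') + ((a : ℝ) - b) * ((y : ℝ) - y')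
          = ((c : ℝ) - d) * (((x : ℝ) - x') + ((a : ℝ) - b) / ((c : ℝ) - d) * ((y : ℝ) - y')) := by
          field_simp
        rw [e, abs_mul, abs_of_pos hcd0] at hmain
        have h1 : ρ * N * W ≤ ρ * N * ((c : ℝ) - d) := by gcongr
        have h2 : ((c : ℝ) - d) * |((x : ℝ) - x') + ((a : ℝ) - b) / ((c : ℝ) - d) * ((y : ℝ) - y')|
          ≤ ((c : ℝ) - d) * (ρ * N) := by linarith
        exact le_of_mul_le_mul_left h2 hcd0
  choose l hl using hd'
  clear hd
  have hRpos : (0 : ℝ) < R.card := by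
    by_contra h
    have := mul_nonpos_of_nonneg_of_nonpos hK0.le (not_lt.mp h)
    linarith [S.card]
  set V := ((R ×ˢ R) ×ˢ (R ×ˢ R)) with hV
  have hVc : (V.card : ℝ) = (R.card : ℝ) ^ 4 := by
    rw [hV, Finset.card_product, Finset.card_product]; push_cast; ring
  let P : ℕ → Finset ((ℤ × ℤ) × (ℤ × ℤ)) := fun k => V.filter
    (fun p => |((p.1.1 : ℝ) - p.2.1) + l k * ((p.1.2 : ℝ) - p.2.2)| ≤ ρ * N)
  -- near part
  have hnear : ∀ k : ℕ, ((V.filter (fun p => |((p.1.1 : ℝ) - p.2.1) + l k * ((p.1.2 : ℝ) - p.2.2)| ≤ ρ * N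
      ∧ |(p.1.2 : ℝ) - p.2.2| ≤ t * N)).card : ℝ)
      ≤ (R.card : ℝ) ^ 2 * ((K * (2 * (t * N)) ^ s) * (K * (2 * (ρ * N)) ^ s)) := by
    intro k
    set E := V.filter (fun p => |((p.1.1 : ℝ) - p.2.1) + l k * ((p.1.2 : ℝ) - p.2.2)| ≤ ρ * N
      ∧ |(p.1.2 : ℝ) - p.2.2| ≤ t * N) with hE
    have h1 : ∀ v : ℤ × ℤ, v ∈ R ×ˢ R → ((E.filter (fun p => p.1 = v)).card : ℝ) ≤
        (K * (2 * (t * N)) ^ s) * (K * (2 * (ρ * N)) ^ s) := by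
      rintro ⟨x, y⟩ hv
      let Y := R.filter (fun y' : ℤ => (y : ℝ) - t * N ≤ y' ∧ (y' : ℝ) ≤ (y - t * N) + 2 * (t * N))
      have hYc : (Y.card : ℝ) ≤ K * (2 * (t * N)) ^ s := S.frost _ _ htN
      have h2 := rep_count (E.filter (fun p => p.1 = (x, y))) Y (fun p y' => p.2.2 = y') 1
        (K * (2 * (ρ * N)) ^ s) (by
          intro p hp
          have hp := Finset.mem_filter.mp hp
          have hp1 := Finset.mem_filter.mp hp.1
          have hpV := hp1.1
          rw [hV] at hpV
          simp only [Finset.mem_product] at hpV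
          have : 0 < (Y.filter (fun y' => p.2.2 = y')).card := by
            refine Finset.card_pos.mpr ⟨p.2.2, Finset.mem_filter.mpr ⟨?_, rfl⟩⟩
            refine Finset.mem_filter.mpr ⟨hpV.2.2, ?_⟩
            have := abs_le.mp hp1.2.2
            rw [hp.2] at this
            simp only at this
            constructor <;> linarith [this.1, this.2]
          exact_mod_cast this) (by
          intro y' _
          refine le_trans ?_ (S.frost ((x + l k * ((y : ℝ) - y')) - ρ * N) (2 * (ρ * N)) hρN)
          refine Nat.cast_le.mpr ?_
          apply Finset.card_le_card_of_injOn (fun p => p.2.1)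
          · intro p hp
            have hp := Finset.mem_filter.mp hp
            have hp0 := Finset.mem_filter.mp hp.1
            have hp1 := Finset.mem_filter.mp hp0.1
            have hpV := hp1.1
            rw [hV] at hpV
            simp only [Finset.mem_product] at hpV
            refine Finset.mem_coe.mpr (Finset.mem_filter.mpr ⟨hpV.2.1, ?_⟩)
            have := abs_le.mp hp1.2.1
            rw [hp0.2, hp.2] at this
            simp only at this
            constructor <;> linarith [this.1, this.2]
          · intro p hp q hq hpq
            have hp := Finset.mem_filter.mp (Finset.mem_coe.mp hp)
            have hp0 := Finset.mem_filter.mp hp.1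
            have hq := Finset.mem_filter.mp (Finset.mem_coe.mp hq)
            have hq0 := Finset.mem_filter.mp hq.1
            exact Prod.ext (hp0.2.trans hq0.2.symm) (Prod.ext hpq (hp.2.trans hq.2.symm)))
      have h3 : (K * (2 * (ρ * N)) ^ s) * (Y.card : ℝ) ≤
        (K * (2 * (ρ * N)) ^ s) * (K * (2 * (t * N)) ^ s) := by gcongr
      linarith
    have hs : (E.card : ℝ) = ∑ v ∈ R ×ˢ R, ((E.filter (fun p => p.1 = v)).card : ℝ) := by
      exact_mod_cast Finset.card_eq_sum_card_fiberwise
        (f := fun p : (ℤ × ℤ) × (ℤ × ℤ) => p.1) (t := R ×ˢ R) (by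
        intro p hp
        have hp1 := Finset.mem_filter.mp (Finset.mem_coe.mp hp)
        exact (Finset.mem_product.mp hp1.1).1)
    rw [hs]
    refine (Finset.sum_le_card_nsmul _ _ _ h1).trans ?_
    rw [nsmul_eq_mul, Finset.card_product]
    push_cast
    rw [sq]
  -- far part
  have hfar : ∑ k ∈ Finset.range n₀, ((V.filter (fun p => |((p.1.1 : ℝ) - p.2.1) +
      l k * ((p.1.2 : ℝ) - p.2.2)| ≤ ρ * N ∧ ¬ |(p.1.2 : ℝ) - p.2.2| ≤ t * N)).card : ℝ)
      ≤ (R.card : ℝ) ^ 4 * (3 / t) := by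
    have hsw := Finset.sum_card_bipartiteAbove_eq_sum_card_bipartiteBelow
      (fun (k : ℕ) (p : (ℤ × ℤ) × (ℤ × ℤ)) => |((p.1.1 : ℝ) - p.2.1) +
      l k * ((p.1.2 : ℝ) - p.2.2)| ≤ ρ * N ∧ ¬ |(p.1.2 : ℝ) - p.2.2| ≤ t * N)
      (s := Finset.range n₀) (t := V)
    simp only [Finset.bipartiteAbove, Finset.bipartiteBelow] at hsw
    have hsw' : ∑ k ∈ Finset.range n₀, ((V.filter (fun p => |((p.1.1 : ℝ) - p.2.1) +
      l k * ((p.1.2 : ℝ) - p.2.2)| ≤ ρ * N ∧ ¬ |(p.1.2 : ℝ) - p.2.2| ≤ t * N)).card : ℝ)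
      = ∑ p ∈ V, (((Finset.range n₀).filter (fun k => |((p.1.1 : ℝ) - p.2.1) +
      l k * ((p.1.2 : ℝ) - p.2.2)| ≤ ρ * N ∧ ¬ |(p.1.2 : ℝ) - p.2.2| ≤ t * N)).card : ℝ) := by
      exact_mod_cast hsw
    rw [hsw', ← hVc, ← nsmul_eq_mul]
    refine Finset.sum_le_card_nsmul _ _ _ ?_
    intro p _
    set I := (Finset.range n₀).filter (fun k => |((p.1.1 : ℝ) - p.2.1) +
      l k * ((p.1.2 : ℝ) - p.2.2)| ≤ ρ * N ∧ ¬ |(p.1.2 : ℝ) - p.2.2| ≤ t * N) with hI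
    have hIc : (I.image (fun k : ℕ => (k : ℤ))).card = I.card :=
      Finset.card_image_of_injective _ Nat.cast_injective
    rw [← hIc]
    refine (card_le_of_diam _ (1 / t + 1) (by positivity) ?_).trans ?_
    · intro x hx y hy
      obtain ⟨k, hk, rfl⟩ := Finset.mem_image.mp hx
      obtain ⟨j, hj, rfl⟩ := Finset.mem_image.mp hy
      have hk := Finset.mem_filter.mp hk
      have hj := Finset.mem_filter.mp hj
      have bk := (hl k (Finset.mem_range.mp hk.1)).1
      have bj := (hl j (Finset.mem_range.mp hj.1)).1
      have ck := abs_le.mp hk.2.1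
      have cj := abs_le.mp hj.2.1
      have hy := not_le.mp hk.2.2
      push_cast
      generalize (p.1.2 : ℝ) - p.2.2 = y at *
      generalize (p.1.1 : ℝ) - p.2.1 = x at *
      have d1 : |(l k - l j) * y| ≤ 2 * (ρ * N) := by
        rw [abs_le]; constructor <;> linarith [ck.1, ck.2, cj.1, cj.2]
      rw [abs_mul] at d1
      have d2 : |l k - l j| * (t * N) ≤ |l k - l j| * |y| := by gcongr
      have d3 : (|l k - l j| * t) * N ≤ (2 * ρ) * N := by linarith
      have d4 := le_of_mul_le_mul_right d3 hN0
      have d5 : |l k - l j| ≤ 2 * ρ / t := by rw [le_div_iff₀ ht]; exact d4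
      have d6 : 8 * ((k : ℝ) - j) * ρ ≤ 2 * ρ / t + 6 * ρ := by
        have := abs_le.mp bk
        have := abs_le.mp bj
        have := abs_le.mp d5
        linarith
      have d7 : (8 * ((k : ℝ) - j)) * ρ ≤ (2 / t + 6) * ρ := by
        have : (2 / t + 6) * ρ = 2 * ρ / t + 6 * ρ := by ring
        linarith
      have d8 := le_of_mul_le_mul_right d7 hρ
      have d9 : 2 / t = 2 * (1 / t) := by ring
      have d10 : 0 < 1 / t := by positivity
      linarith
    · have d10 : 1 ≤ 1 / t := by rw [le_div_iff₀ ht]; linarith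
      have d9 : 3 / t = 3 * (1 / t) := by ring
      linarith
  have hsum : (n₀ : ℝ) * (R.card : ℝ) ^ 4 ≤ K ^ 61 * N ^ s *
      ((n₀ : ℝ) * ((R.card : ℝ) ^ 2 * ((K * (2 * (t * N)) ^ s) * (K * (2 * (ρ * N)) ^ s)))
        + (R.card : ℝ) ^ 4 * (3 / t)) := by
    have h1 : (n₀ : ℝ) * (R.card : ℝ) ^ 4 ≤ ∑ k ∈ Finset.range n₀, K ^ 61 * N ^ s * ((P k).card : ℝ) := by
      have := Finset.card_nsmul_le_sum (Finset.range n₀) (fun k => K ^ 61 * N ^ s * ((P k).card : ℝ))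
        ((R.card : ℝ) ^ 4) (fun k hk => (hl k (Finset.mem_range.mp hk)).2)
      rwa [nsmul_eq_mul, Finset.card_range] at this
    refine h1.trans ?_
    rw [← Finset.mul_sum]
    gcongr
    have h2 : ∀ k ∈ Finset.range n₀, ((P k).card : ℝ) ≤
        (R.card : ℝ) ^ 2 * ((K * (2 * (t * N)) ^ s) * (K * (2 * (ρ * N)) ^ s)) +
        ((V.filter (fun p => |((p.1.1 : ℝ) - p.2.1) +
      l k * ((p.1.2 : ℝ) - p.2.2)| ≤ ρ * N ∧ ¬ |(p.1.2 : ℝ) - p.2.2| ≤ t * N)).card : ℝ) := by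
      intro k _
      have := Finset.card_filter_add_card_filter_not (s := P k)
        (fun p => |(p.1.2 : ℝ) - p.2.2| ≤ t * N)
      simp only [P, Finset.filter_filter] at this
      have this' := congrArg (Nat.cast : ℕ → ℝ) this
      rw [Nat.cast_add] at this'
      rw [← this']
      gcongr
      exact hnear k
    refine (Finset.sum_le_sum h2).trans ?_
    rw [Finset.sum_add_distrib, Finset.sum_const, Finset.card_range, nsmul_eq_mul]
    gcongr
  clear hfar hnear hl
  have hs1 := S.s1
  have hn₀0 : (0 : ℝ) < n₀ := lt_of_lt_of_le (by positivity) hn₀pos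
  have e1 : (2 * (t * N)) ^ s * (2 * (ρ * N)) ^ s ≤ 4 * ((t * ρ) ^ s * (N ^ s * N ^ s)) := by
    rw [← Real.mul_rpow (by positivity) (by positivity),
      ← Real.mul_rpow hN0.le hN0.le, ← Real.mul_rpow (by positivity) (by positivity),
      show 2 * (t * N) * (2 * (ρ * N)) = 4 * (t * ρ * (N * N)) by ring]
    exact rpow_mul_le hs1 (by norm_num) (by positivity)
  have e2 : N ^ s * N ^ s ≤ (K * R.card) * (K * R.card) := by
    have := S.card
    gcongr
  have htρ : 0 < (t * ρ) ^ s := Real.rpow_pos_of_pos (by positivity) s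
  have e3 : (R.card : ℝ) ^ 2 * ((K * (2 * (t * N)) ^ s) * (K * (2 * (ρ * N)) ^ s))
      ≤ (R.card : ℝ) ^ 4 * (4 * K ^ 4 * (t * ρ) ^ s) := by
    calc _ = (R.card : ℝ) ^ 2 * K ^ 2 * ((2 * (t * N)) ^ s * (2 * (ρ * N)) ^ s) := by ring
      _ ≤ (R.card : ℝ) ^ 2 * K ^ 2 * (4 * ((t * ρ) ^ s * ((K * R.card) * (K * R.card)))) := by
        have e1' : (2 * (t * N)) ^ s * (2 * (ρ * N)) ^ s ≤
            4 * ((t * ρ) ^ s * ((K * R.card) * (K * R.card))) := by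
          refine e1.trans ?_
          gcongr
        exact mul_le_mul_of_nonneg_left e1' (by positivity)
      _ = _ := by ring
  have e4 : 3 / t ≤ n₀ * (24 * (ρ / t)) := by
    have : 1 ≤ n₀ * (8 * ρ) := by rwa [div_le_iff₀ (by positivity)] at hn₀pos
    calc 3 / t = (3 / t) * 1 := by ring
      _ ≤ (3 / t) * (n₀ * (8 * ρ)) := by gcongr
      _ = _ := by ring
  have e5 : ((n₀ : ℝ) * (R.card : ℝ) ^ 4) * 1 ≤ ((n₀ : ℝ) * (R.card : ℝ) ^ 4) *
      (K ^ 61 * N ^ s * (4 * K ^ 4 * (t * ρ) ^ s + 24 * (ρ / t))) := by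
    calc _ = (n₀ : ℝ) * (R.card : ℝ) ^ 4 := by ring
      _ ≤ _ := hsum
      _ ≤ K ^ 61 * N ^ s * ((n₀ : ℝ) * ((R.card : ℝ) ^ 4 * (4 * K ^ 4 * (t * ρ) ^ s))
        + (R.card : ℝ) ^ 4 * (n₀ * (24 * (ρ / t)))) := by gcongr
      _ = _ := by ring
  exact le_of_mul_le_mul_left e5 (by positivity)

end CSP

namespace CSP
open scoped Classical Pointwise

set_option maxHeartbeats 2000000 in
lemma Setup.core {s N K : ℝ} {p₀ : ℤ} {R B : Finset ℤ} (S : Setup s N K p₀ R B) :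
    N ^ (s * (1 - s) / 18) ≤ K ^ 71 := by
  have hs0 := S.s0
  have hs1 := S.s1
  have hN1 := S.N1
  have hN0 : 0 < N := by linarith
  have hK10 := S.K10
  have hK0 : 0 < K := by linarith
  have hK1 : 1 ≤ K := by linarith
  obtain ⟨γ, hγ⟩ : ∃ γ : ℝ, γ = (5 - s) / (2 * (3 - s)) := ⟨_, rfl⟩
  obtain ⟨τ, hτ⟩ : ∃ τ : ℝ, τ = (1 - s) / (6 * (3 - s)) := ⟨_, rfl⟩
  obtain ⟨θ, hθ⟩ : ∃ θ : ℝ, θ = (1 - s) / 2 := ⟨_, rfl⟩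
  obtain ⟨κ, hκ⟩ : ∃ κ : ℝ, κ = s * (1 - s) / 18 := ⟨_, rfl⟩
  have h3s : 0 < 3 - s := by linarith
  have hτ0 : 0 < τ := by rw [hτ]; exact div_pos (by linarith) (by linarith)
  have hγτ : 1 - γ = 3 * τ := by rw [hγ, hτ]; field_simp; ring
  have hθ0 : 0 < θ := by rw [hθ]; linarith
  have hγ0 : 0 < γ := by rw [hγ]; exact div_pos (by linarith) (by linarith)
  have hγ1 : γ < 1 := by linarith
  have hτγ : τ ≤ γ := by
    rw [hτ, hγ, div_le_div_iff₀ (by linarith) (by linarith)]; nlinarith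
  have hθ1 : θ < 1 := by rw [hθ]; linarith
  have hκτ : κ ≤ τ * s := by
    rw [hκ, hτ, div_mul_eq_mul_div, div_le_div_iff₀ (by norm_num) (by linarith)]
    nlinarith [mul_pos hs0 (by linarith : 0 < 1 - s), mul_pos (mul_pos hs0 hs0) (by linarith : 0 < 1 - s)]
  have hκτ' : κ ≤ τ := by nlinarith
  have hx1 : s - s * (γ * θ + γ) ≤ -κ := by
    have : γ * θ + γ = 1 + (1 - s) / 4 := by rw [hγ, hθ]; field_simp; ring
    rw [this, hκ]
    nlinarith [mul_pos hs0 (by linarith : 0 < 1 - s)]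
  have hx2 : s - γ + γ * θ ≤ -κ := by
    have : s - γ + γ * θ = - ((1 - s) * (5 - 3 * s) / (4 * (3 - s))) := by
      rw [hγ, hθ]; field_simp; ring
    rw [this, hκ, neg_le_neg_iff, div_le_div_iff₀ (by norm_num) (by linarith)]
    have : s * (4 * (3 - s)) ≤ (5 - 3 * s) * 18 := by nlinarith
    nlinarith [mul_le_mul_of_nonneg_left this (by linarith : 0 ≤ 1 - s)]
  rw [← hκ]
  have hpw : ∀ {x y : ℝ}, x ≤ y → N ^ x ≤ N ^ y := fun h =>
    Real.rpow_le_rpow_of_exponent_le hN1 h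
  have hKpow : ∀ {i j : ℕ}, i ≤ j → K ^ i ≤ K ^ j := fun h => pow_le_pow_right₀ hK1 h
  by_cases hsmall : N ^ τ < 9 / 2
  · calc N ^ κ ≤ N ^ τ := hpw hκτ'
      _ ≤ K ^ 1 := by rw [pow_one]; linarith
      _ ≤ _ := hKpow (by norm_num)
  have hbig : 9 / 2 ≤ N ^ τ := not_lt.mp hsmall
  obtain ⟨W, hW⟩ : ∃ W : ℝ, W = N ^ (1 - τ) := ⟨_, rfl⟩
  obtain ⟨ρ, hρ⟩ : ∃ ρ : ℝ, ρ = N ^ (-γ) := ⟨_, rfl⟩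
  obtain ⟨t, ht⟩ : ∃ t : ℝ, t = N ^ (-(γ * θ)) := ⟨_, rfl⟩
  have hρ0 : 0 < ρ := by rw [hρ]; positivity
  have ht0 : 0 < t := by rw [ht]; positivity
  have hτ1 : τ < 1 := by linarith
  have hW1 : 1 ≤ W := by rw [hW]; exact Real.one_le_rpow hN1 (by linarith)
  have hWs : W ^ s = N ^ (s - τ * s) := by
    rw [hW, ← Real.rpow_mul hN0.le]; congr 1; ring
  have hfin : ∀ j : ℕ, j ≤ 71 → N ^ s ≤ K ^ j * W ^ s → N ^ κ ≤ K ^ 71 := by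
    intro j hj h
    rw [hWs, Real.rpow_sub hN0] at h
    have hNs : 0 < N ^ s := by positivity
    have hNt : 0 < N ^ (τ * s) := by positivity
    rw [mul_div_assoc', le_div_iff₀ hNt, mul_comm] at h
    have h2 := le_of_mul_le_mul_right h hNs
    exact (hpw hκτ).trans (h2.trans (hKpow hj))
  have hRne : R.Nonempty := by
    by_contra h
    rw [Finset.not_nonempty_iff_eq_empty] at h
    have h2 := S.card
    rw [h] at h2
    simp at h2
    have : 0 < N ^ s := by positivity
    linarith
  by_cases hdiam : (R.max' hRne : ℝ) - (R.min' hRne : ℝ) < W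
  · apply hfin 2 (by norm_num)
    have h1 := S.frost (R.min' hRne) W hW1
    rw [Finset.filter_true_of_mem] at h1
    · calc N ^ s ≤ K * R.card := S.card
        _ ≤ K * (K * W ^ s) := by gcongr
        _ = _ := by ring
    · intro x hx
      have h2 : (R.min' hRne : ℝ) ≤ x := by exact_mod_cast R.min'_le x hx
      have h3 : (x : ℝ) ≤ R.max' hRne := by exact_mod_cast R.le_max' x hx
      exact ⟨h2, by linarith⟩
  have hdiam := not_lt.mp hdiam
  have hWρ : 9 * N ≤ 2 * ρ * W ^ 2 := by
    have : ρ * W ^ 2 = N * N ^ τ := by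
      rw [hρ, hW, ← Real.rpow_natCast, ← Real.rpow_mul hN0.le, ← Real.rpow_add hN0]
      nth_rewrite 2 [← Real.rpow_one N]
      rw [← Real.rpow_add hN0]
      congr 1; push_cast; linarith
    nlinarith
  by_cases hgap : ∃ a b c d : ℤ, a ∈ R ∧ b ∈ R ∧ c ∈ R ∧ d ∈ R ∧ W ≤ (c : ℝ) - d ∧
      |(a : ℝ) - b| ≤ 2 * ((c : ℝ) - d) ∧ ∃ β : ℤ, (β = 0 ∨ β = 1) ∧
      ∀ a' b' c' d' : ℤ, a' ∈ R → b' ∈ R → c' ∈ R → d' ∈ R → W ≤ (c' : ℝ) - d' →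
      ρ < |(((a : ℝ) - b) + β * ((c : ℝ) - d)) / (2 * ((c : ℝ) - d))
        - ((a' : ℝ) - b') / ((c' : ℝ) - d')|
  · obtain ⟨a, b, c, d, ha, hb, hc, hd, h1, h2, β, hβ, h3⟩ := hgap
    exact hfin 71 le_rfl (S.gap W ρ hW1 hWρ ha hb hc hd h1 h2 β hβ h3)
  let Q : Set ℝ := {q | ∃ a b c d : ℤ, a ∈ R ∧ b ∈ R ∧ c ∈ R ∧ d ∈ R ∧ W ≤ (c : ℝ) - d ∧
    q = ((a : ℝ) - b) / ((c : ℝ) - d)}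
  have hρinv : ρ * N ^ γ = 1 := by
    rw [hρ, ← Real.rpow_add hN0]; simp
  have hρhalf : ρ ≤ 1 / 2 := by
    have h1 : 9 / 2 ≤ N ^ γ := hbig.trans (hpw hτγ)
    have : ρ * (9 / 2) ≤ ρ * N ^ γ := by gcongr
    linarith
  have h0Q : (0 : ℝ) ∈ Q := ⟨_, _, _, _, R.max'_mem hRne, R.max'_mem hRne, R.max'_mem hRne,
    R.min'_mem hRne, hdiam, by simp⟩
  have hstep : ∀ q ∈ Q, |q| ≤ 2 → ∀ β : ℤ, β = 0 ∨ β = 1 → ∃ q' ∈ Q, |(q + β) / 2 - q'| ≤ ρ := by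
    rintro q ⟨a, b, c, d, ha, hb, hc, hd, hcd, rfl⟩ hq2 β hβ
    by_contra hcon
    push Not at hcon
    apply hgap
    have hcd0 : 0 < (c : ℝ) - d := by linarith
    refine ⟨a, b, c, d, ha, hb, hc, hd, hcd, ?_, β, hβ, ?_⟩
    · rw [abs_div, abs_of_pos hcd0, div_le_iff₀ hcd0] at hq2
      exact hq2
    · intro a' b' c' d' ha' hb' hc' hd' hcd'
      have := hcon _ ⟨a', b', c', d', ha', hb', hc', hd', hcd', rfl⟩
      have e : (((a : ℝ) - b) + β * ((c : ℝ) - d)) / (2 * ((c : ℝ) - d))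
        = (((a : ℝ) - b) / ((c : ℝ) - d) + β) / 2 := by field_simp
      rw [e]; exact this
  obtain ⟨n, hn⟩ := exists_pow_lt_of_lt_one hρ0 (by norm_num : (1 / 2 : ℝ) < 1)
  have hdense : ∀ x : ℝ, 0 ≤ x → x ≤ 1 → ∃ a b c d : ℤ, a ∈ R ∧ b ∈ R ∧ c ∈ R ∧ d ∈ R ∧
      W ≤ (c : ℝ) - d ∧ |((a : ℝ) - b) / ((c : ℝ) - d) - x| ≤ 3 * ρ := by
    intro x hx0 hx1
    obtain ⟨q, ⟨a, b, c, d, ha, hb, hc, hd, hcd, rfl⟩, _, hq⟩ :=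
      dense_aux Q ρ hρ0.le hρhalf h0Q hstep n x hx0 hx1
    exact ⟨a, b, c, d, ha, hb, hc, hd, hcd, by linarith⟩
  have hWρ' : 4 * N ≤ ρ * N * W := by
    have : ρ * W = N ^ (2 * τ) := by
      rw [hρ, hW, ← Real.rpow_add hN0]; congr 1; linarith
    have h2 : N ^ τ ≤ N ^ (2 * τ) := hpw (by linarith)
    calc 4 * N ≤ N ^ (2 * τ) * N := by gcongr; linarith
      _ = _ := by rw [← this]; ring
  have ht1 : t ≤ 1 := by rw [ht]; exact Real.rpow_le_one_of_one_le_of_nonpos hN1 (by nlinarith)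
  have hNN : ∀ x : ℝ, x ≤ 1 → 1 ≤ N ^ (-x) * N := by
    intro x hx
    nth_rewrite 2 [← Real.rpow_one N]
    rw [← Real.rpow_add hN0]
    exact Real.one_le_rpow hN1 (by linarith)
  have htN := hNN (γ * θ) (by nlinarith)
  have hρN := hNN γ hγ1.le
  rw [← ht] at htN
  rw [← hρ] at hρN
  have hD := S.dense W ρ t (by linarith) hρ0 ht0 ht1 hWρ' (by linarith) (by linarith) hdense
  have y1 : N ^ s * (t * ρ) ^ s ≤ N ^ (-κ) := by
    have : N ^ s * (t * ρ) ^ s = N ^ (s - s * (γ * θ + γ)) := by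
      rw [ht, hρ, ← Real.rpow_add hN0, ← Real.rpow_mul hN0.le, ← Real.rpow_add hN0]
      congr 1; ring
    rw [this]; exact hpw hx1
  have y2 : N ^ s * (ρ / t) ≤ N ^ (-κ) := by
    have : N ^ s * (ρ / t) = N ^ (s - γ + γ * θ) := by
      rw [ht, hρ, ← Real.rpow_sub hN0, ← Real.rpow_add hN0]
      congr 1; ring
    rw [this]; exact hpw hx2
  have hD2 : 1 ≤ K ^ 66 * N ^ (-κ) := by
    calc (1 : ℝ) ≤ _ := hD
      _ = K ^ 61 * (4 * K ^ 4 * (N ^ s * (t * ρ) ^ s) + 24 * (N ^ s * (ρ / t))) := by ring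
      _ ≤ K ^ 61 * (4 * K ^ 4 * N ^ (-κ) + 24 * N ^ (-κ)) := by gcongr
      _ = K ^ 61 * ((4 * K ^ 4 + 24) * N ^ (-κ)) := by ring
      _ ≤ K ^ 61 * (K ^ 5 * N ^ (-κ)) := by
        gcongr
        have : (24 : ℝ) ≤ K ^ 4 := by
          calc (24 : ℝ) ≤ 10 ^ 4 := by norm_num
            _ ≤ _ := by gcongr
        have : 10 * K ^ 4 ≤ K * K ^ 4 := by gcongr
        nlinarith
      _ = _ := by ring
  rw [Real.rpow_neg hN0.le, ← div_eq_mul_inv, le_div_iff₀ (by positivity), one_mul] at hD2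
  exact hD2.trans (hKpow (by norm_num))

end CSP

namespace CSP
open scoped Classical Pointwise

def HH (U : Finset ℤ) (n : ℕ) : Finset ℤ := n • U - n • U

lemma HH_add {U : Finset ℤ} {i j : ℕ} {x y : ℤ} (hx : x ∈ HH U i) (hy : y ∈ HH U j) :
    x + y ∈ HH U (i + j) := by
  obtain ⟨a, ha, b, hb, rfl⟩ := Finset.mem_sub.mp hx
  obtain ⟨c, hc, d, hd, rfl⟩ := Finset.mem_sub.mp hy
  refine Finset.mem_sub.mpr ⟨a + c, ?_, b + d, ?_, by ring⟩
  · rw [add_nsmul]; exact Finset.add_mem_add ha hc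
  · rw [add_nsmul]; exact Finset.add_mem_add hb hd

lemma HH_neg {U : Finset ℤ} {i : ℕ} {x : ℤ} (hx : x ∈ HH U i) : -x ∈ HH U i := by
  obtain ⟨a, ha, b, hb, rfl⟩ := Finset.mem_sub.mp hx
  exact Finset.mem_sub.mpr ⟨b, hb, a, ha, by ring⟩

lemma zero_mem_nsmul {U : Finset ℤ} (h0 : 0 ∈ U) (i : ℕ) : 0 ∈ i • U := by
  induction i with
  | zero => simp
  | succ n ih => rw [succ_nsmul]; simpa using Finset.add_mem_add ih h0

lemma HH_zero {U : Finset ℤ} (h0 : 0 ∈ U) (i : ℕ) : 0 ∈ HH U i :=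
  Finset.mem_sub.mpr ⟨0, zero_mem_nsmul h0 i, 0, zero_mem_nsmul h0 i, by simp⟩

lemma HH_mono {U : Finset ℤ} (h0 : 0 ∈ U) {i j : ℕ} (h : i ≤ j) : HH U i ⊆ HH U j := by
  intro x hx
  have := HH_add hx (HH_zero h0 (j - i))
  rwa [add_zero, Nat.add_sub_cancel' h] at this

lemma HH_nat {U : Finset ℤ} (h0 : 0 ∈ U) {i : ℕ} {x : ℤ} (hx : x ∈ HH U i) (c : ℕ) :
    (c : ℤ) * x ∈ HH U (c * i) := by
  induction c with
  | zero => simpa using HH_zero h0 0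
  | succ n ih =>
    have := HH_add ih hx
    push_cast
    rw [add_mul, one_mul, add_mul, one_mul]
    exact this

lemma HH_int {U : Finset ℤ} (h0 : 0 ∈ U) {i : ℕ} {x : ℤ} (hx : x ∈ HH U i) (c : ℤ) :
    c * x ∈ HH U (c.natAbs * i) := by
  rcases Int.natAbs_eq c with h | h
  · have := HH_nat h0 hx c.natAbs
    rwa [← h] at this
  · have := HH_neg (HH_nat h0 hx c.natAbs)
    rwa [← neg_mul, ← h] at this

lemma HH_eq (U : Finset ℤ) (n : ℕ) : HH U n = n • U - n • U := rfl

lemma HH_one {U : Finset ℤ} {u v x : ℤ} (hu : u ∈ U) (hv : v ∈ U) (h : u - v = x) : x ∈ HH U 1 :=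
  Finset.mem_sub.mpr ⟨u, by rwa [one_nsmul], v, by rwa [one_nsmul], h⟩

attribute [irreducible] HH

lemma floor_add_card (F D E : Finset ℤ)
    (h : ∀ a ∈ D, ∀ b ∈ E, a + b ∈ F ∨ a + b + 1 ∈ F) : ((D + E).card : ℝ) ≤ 2 * F.card := by
  have h1 : D + E ⊆ F + {0, -1} := by
    intro x hx
    obtain ⟨a, ha, b, hb, rfl⟩ := Finset.mem_add.mp hx
    rcases h a ha b hb with h' | h'
    · exact Finset.mem_add.mpr ⟨_, h', 0, by simp, by simp⟩
    · exact Finset.mem_add.mpr ⟨_, h', -1, by simp, by ring⟩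
  have h2 := (Finset.card_le_card h1).trans Finset.card_add_le
  have h3 : (F.card * ({0, -1} : Finset ℤ).card : ℕ) ≤ 2 * F.card := by
    rw [mul_comm]; gcongr; exact Finset.card_le_two
  exact_mod_cast h2.trans h3

lemma floor_two (u v : ℝ) : ⌊u⌋ + ⌊v⌋ = ⌊u + v⌋ ∨ ⌊u⌋ + ⌊v⌋ + 1 = ⌊u + v⌋ := by
  have h1 := Int.le_floor_add u v
  have h2 := Int.le_floor_add_floor u v
  omega

set_option maxHeartbeats 2000000 in
theorem integer_thm (s : ℝ) (hs0 : 0 < s) (hs1 : s < 1) (α₁ α₂ α₃ : ℤ)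
    (hdisc : α₂ ^ 2 - 4 * α₁ * α₃ ≠ 0) : ∃ m : ℕ, ∀ (N K : ℝ) (A : Finset ℤ) (G : Finset (ℤ × ℤ)),
    1 ≤ N → 10 ≤ K → (∀ a : ℤ, a ∈ A → (0 : ℝ) ≤ a) → (∀ a : ℤ, a ∈ A → (a : ℝ) ≤ N) →
    N ^ s ≤ A.card → (A.card : ℝ) ≤ K * N ^ s →
    (∀ x l : ℝ, 1 ≤ l → ((A.filter (fun t : ℤ => x ≤ t ∧ (t : ℝ) ≤ x + l)).card : ℝ) ≤ K * l ^ s) →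
    G ⊆ A ×ˢ A →
    (∀ x ∈ A, (A.card : ℝ) ≤ K * (A.filter (fun y => (x, y) ∈ G)).card) →
    (∀ y ∈ A, (A.card : ℝ) ≤ K * (A.filter (fun x => (x, y) ∈ G)).card) →
    ((G.image (fun p => p.1 + p.2)).card : ℝ) ≤ K * A.card →
    ((G.image (fun p => ⌊((α₁ * p.1 ^ 2 + α₂ * (p.1 * p.2) + α₃ * p.2 ^ 2 : ℤ) : ℝ) / N⌋)).card : ℝ)
      ≤ K * A.card →
    N ^ (s * (1 - s) / 18) ≤ K ^ m := by
  obtain ⟨j, hj⟩ : ∃ j : ℕ, j = ⌈5 / s⌉₊ := ⟨_, rfl⟩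
  have hjs : 5 ≤ j * s := by
    have : 5 / s ≤ j := by rw [hj]; exact Nat.le_ceil _
    rwa [div_le_iff₀ hs0] at this
  obtain ⟨q, hq⟩ : ∃ q : ℕ, q = (2 * α₁).natAbs * 2 + α₂.natAbs * 2 + (2 * α₃).natAbs * 2 := ⟨_, rfl⟩
  obtain ⟨n, hn⟩ : ∃ n : ℕ, n = q + 6 := ⟨_, rfl⟩
  obtain ⟨e, he⟩ : ∃ e : ℕ, e = j + 136 * n + 20 := ⟨_, rfl⟩
  refine ⟨e * 71, ?_⟩
  intro N K A G hN hK hA0 hAN hAc hAK hF hG hrow hcol hsum hcell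
  have hN0 : 0 < N := by linarith
  have hK0 : 0 < K := by linarith
  have hK1 : 1 ≤ K := by linarith
  have hNs : 0 < N ^ s := by positivity
  have hKpow : ∀ {i j : ℕ}, i ≤ j → K ^ i ≤ K ^ j := fun h => pow_le_pow_right₀ hK1 h
  have hApos : (0 : ℝ) < A.card := by linarith
  have hAne : A.Nonempty := by rw [← Finset.card_pos]; exact_mod_cast hApos
  obtain ⟨L, hL⟩ : ∃ L : ℝ, L = K ^ j := ⟨_, rfl⟩
  have hL1 : 1 ≤ L := by rw [hL]; exact one_le_pow₀ hK1
  have hL0 : 0 < L := by linarith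
  have hLs : 2 * K ^ 4 ≤ L ^ s := by
    have h1 : L ^ s = K ^ (j * s : ℝ) := by
      rw [hL, ← Real.rpow_natCast, ← Real.rpow_mul hK0.le]
    have h2 : K ^ (5 : ℝ) ≤ K ^ (j * s : ℝ) := Real.rpow_le_rpow_of_exponent_le hK1 hjs
    have h3 : K ^ (5 : ℝ) = K ^ (5 : ℕ) := by exact_mod_cast Real.rpow_natCast K 5
    rw [h1]
    refine le_trans ?_ h2
    rw [h3]
    have : 2 * K ^ 4 ≤ K * K ^ 4 := by gcongr; linarith
    calc 2 * K ^ 4 ≤ K * K ^ 4 := this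
      _ = _ := by ring
  by_cases hNL : N < L
  · have h1 : N ^ (s * (1 - s) / 18) ≤ N ^ (1 : ℝ) :=
      Real.rpow_le_rpow_of_exponent_le hN (by nlinarith)
    rw [Real.rpow_one] at h1
    rw [hL] at hNL
    exact h1.trans (hNL.le.trans (hKpow (by omega)))
  have hNL := not_lt.mp hNL
  obtain ⟨A', hA', B', hB', hA'ne, hA'c, hG'c, hU⟩ := struct A G K hK hAne hG hrow hcol hsum
  set U := (-A') ∪ B' ∪ {0} with hUdef
  have hU0 : 0 ∈ U := by simp [hUdef]
  have hAH : ∀ x ∈ A', x ∈ HH U 1 := by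
    intro x hx
    exact HH_one hU0 (by rw [hUdef]; simp [hx] : -x ∈ U) (by ring)
  have hBH : ∀ x ∈ B', x ∈ HH U 1 := by
    intro x hx
    exact HH_one (by rw [hUdef]; simp [hx] : x ∈ U) hU0 (by ring)
  have hcardH : ∀ X : Finset ℤ, ∀ i ≤ n, X ⊆ HH U i → (X.card : ℝ) ≤ K ^ (34 * n) * A.card := by
    intro X i hi hX
    refine le_trans (Nat.cast_le.mpr (Finset.card_le_card (hX.trans (HH_mono hU0 hi)))) (by rw [HH_eq]; exact hU n)
  have hBB : B' + B' ⊆ HH U (1 + 1) := by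
    intro x hx
    obtain ⟨a, ha, b, hb, rfl⟩ := Finset.mem_add.mp hx
    exact HH_add (hBH a ha) (hBH b hb)
  have hAA : A' + A' ⊆ HH U (1 + 1) := by
    intro x hx
    obtain ⟨a, ha, b, hb, rfl⟩ := Finset.mem_add.mp hx
    exact HH_add (hAH a ha) (hAH b hb)
  have hsubH : ∀ {X Y : Finset ℤ} {i k : ℕ}, X ⊆ HH U i → Y ⊆ HH U k → X + Y ⊆ HH U (i + k) := by
    intro X Y i k hX hY x hx
    obtain ⟨a, ha, b, hb, rfl⟩ := Finset.mem_add.mp hx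
    exact HH_add (hX ha) (hY hb)
  have hform : ∀ c c' : ℤ, c.natAbs * (1 + 1) + c'.natAbs * (1 + 1) ≤ q → ∀ x ∈ A', ∀ x' ∈ A', ∀ y ∈ B', ∀ y' ∈ B',
      c * (x - x') + c' * (y - y') ∈ HH U q := by
    intro c c' hcc x hx x' hx' y hy y' hy'
    apply HH_mono hU0 hcc
    apply HH_add
    · apply HH_int hU0
      rw [sub_eq_add_neg]
      exact HH_add (hAH x hx) (HH_neg (hAH x' hx'))
    · apply HH_int hU0
      rw [sub_eq_add_neg]
      exact HH_add (hBH y hy) (HH_neg (hBH y' hy'))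
  -- the graph
  set G₁ := G.filter (fun p => p.1 ∈ A' ∧ p.2 ∈ B') with hG₁
  set G₂ := G₁.filter (fun p => N / L ≤ (p.1 : ℝ)) with hG₂
  have hbad : ((G₁.filter (fun p => ¬ N / L ≤ (p.1 : ℝ))).card : ℝ) ≤ (K * (N / L) ^ s) * A.card := by
    have h1 : G₁.filter (fun p => ¬ N / L ≤ (p.1 : ℝ)) ⊆
        (A.filter (fun t : ℤ => (0 : ℝ) ≤ t ∧ (t : ℝ) ≤ 0 + N / L)) ×ˢ A := by
      intro p hp
      have hp := Finset.mem_filter.mp hp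
      have hp1 := Finset.mem_product.mp (hG (Finset.mem_filter.mp hp.1).1)
      refine Finset.mem_product.mpr ⟨Finset.mem_filter.mpr ⟨hp1.1, hA0 _ hp1.1, ?_⟩, hp1.2⟩
      have := not_le.mp hp.2
      linarith
    have h2 := Finset.card_le_card h1
    rw [Finset.card_product] at h2
    have h3 := hF 0 (N / L) (by rw [le_div_iff₀ hL0]; linarith)
    calc _ ≤ (((A.filter (fun t : ℤ => (0 : ℝ) ≤ t ∧ (t : ℝ) ≤ 0 + N / L)).card * A.card : ℕ) : ℝ) :=
          Nat.cast_le.mpr h2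
      _ ≤ _ := by rw [Nat.cast_mul]; gcongr
  have hG₂c : (A.card : ℝ) ^ 2 / (2 * K ^ 3) ≤ G₂.card := by
    have h1 := Finset.card_filter_add_card_filter_not (s := G₁) (fun p => N / L ≤ (p.1 : ℝ))
    have h2 : (G₂.card : ℝ) + ((G₁.filter (fun p => ¬ N / L ≤ (p.1 : ℝ))).card : ℝ) = G₁.card := by
      rw [← h1, Nat.cast_add]
    have h3 : K * (N / L) ^ s * A.card * (2 * K ^ 3) ≤ (A.card : ℝ) ^ 2 := by
      rw [Real.div_rpow hN0.le hL0.le]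
      have hLs0 : 0 < L ^ s := by positivity
      have : K * (N ^ s / L ^ s) * A.card * (2 * K ^ 3) = (2 * K ^ 4) * (N ^ s * A.card) / L ^ s := by
        ring
      rw [this, div_le_iff₀ hLs0]
      calc (2 * K ^ 4) * (N ^ s * A.card) ≤ L ^ s * (A.card * A.card) := by gcongr
        _ = _ := by ring
    rw [div_le_iff₀ (by positivity)]
    have h4 := mul_le_mul_of_nonneg_right hbad (by positivity : 0 ≤ 2 * K ^ 3)
    have h5 : (G₂.card : ℝ) * (2 * K ^ 3) + ((G₁.filter (fun p => ¬ N / L ≤ (p.1 : ℝ))).card : ℝ) * (2 * K ^ 3)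
      = 2 * (K ^ 3 * G₁.card) := by rw [← h2]; ring
    linarith
  obtain ⟨h, hh⟩ : ∃ h : ℝ, h = K ^ (34 * n) * A.card := ⟨_, rfl⟩
  have hh0 : 0 < h := by rw [hh]; positivity
  rw [← hh] at hcardH
  obtain ⟨p₀, hp₀, hp₀N, R, hRB, hRc, hRim⟩ := energy α₁ α₂ α₃ hdisc N L h (K * A.card)
    ((A.card : ℝ) ^ 2 / (2 * K ^ 3)) hN hL1 A' B' (HH U q) (HH U q) G₂
    (by
      intro p hp
      have := (Finset.mem_filter.mp (Finset.mem_filter.mp hp).1).2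
      exact Finset.mem_product.mpr this)
    (fun p hp => (Finset.mem_filter.mp hp).2)
    (hform _ _ (by omega)) (hform _ _ (by omega)) hh0 (by positivity) (by positivity)
    (hcardH _ (1 + 1) (by omega) hAA) (hcardH _ (1 + 1) (by omega) hBB)
    (hcardH _ q (by omega) (Finset.Subset.refl _))
    (hcardH _ (1 + 1 + q) (by omega) (hsubH hBB (Finset.Subset.refl _)))
    (hcardH _ (1 + 1 + q) (by omega) (hsubH hBB (Finset.Subset.refl _)))
    (le_trans (Nat.cast_le.mpr (Finset.card_le_card (Finset.image_subset_image
      ((Finset.filter_subset _ _).trans (Finset.filter_subset _ _))))) hcell) hG₂c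
  have h100 : (40 : ℝ) ≤ K ^ 2 := by nlinarith
  have hcard' : N ^ s ≤ K ^ e * R.card := by
    have hRc' := hRc
    rw [hL, hh] at hRc'
    have e1 : ((A.card : ℝ) ^ 3) * A.card ≤ (A.card : ℝ) ^ 3 * (40 * K ^ (7 + j + 68 * n) * R.card) := by
      calc ((A.card : ℝ) ^ 3) * A.card = ((A.card : ℝ) ^ 2 / (2 * K ^ 3)) ^ 2 * (4 * K ^ 6) := by
            field_simp; ring
        _ ≤ (10 * K ^ j * (K * A.card) * (K ^ (34 * n) * A.card) ^ 2 * R.card) * (4 * K ^ 6) := by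
            gcongr
        _ = _ := by
            rw [pow_add, pow_add, mul_pow, ← pow_mul, show 34 * n * 2 = 68 * n by ring]; ring
    have e2 := le_of_mul_le_mul_left e1 (by positivity)
    calc N ^ s ≤ A.card := hAc
      _ ≤ _ := e2
      _ ≤ K ^ 2 * K ^ (7 + j + 68 * n) * R.card := by gcongr
      _ = K ^ (2 + (7 + j + 68 * n)) * R.card := by rw [pow_add K 2]
      _ ≤ _ := by
        have := hKpow (show 2 + (7 + j + 68 * n) ≤ e by omega)
        gcongr
  have hfrost' : ∀ x l : ℝ, 1 ≤ l →
      ((R.filter (fun t : ℤ => x ≤ t ∧ (t : ℝ) ≤ x + l)).card : ℝ) ≤ K ^ e * l ^ s := by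
    intro x l hl
    obtain ⟨Z, hZA, hZsep, hZc⟩ := exists_sep A' l (K * (2 * l) ^ s) (by linarith) (by
      intro y
      refine le_trans (Nat.cast_le.mpr (Finset.card_le_card ?_)) (hF y (2 * l) (by linarith))
      exact Finset.filter_subset_filter _ hA')
    set RI := R.filter (fun t : ℤ => x ≤ t ∧ (t : ℝ) ≤ x + l) with hRI
    have hprod : (RI.card : ℝ) * Z.card ≤ h := by
      have hinj : Set.InjOn (fun p : ℤ × ℤ => p.1 + p.2) (RI ×ˢ Z : Finset (ℤ × ℤ)) := by
        rintro ⟨r, z⟩ hp ⟨r', z'⟩ hp' heq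
        simp only [Finset.coe_product, Set.mem_prod, Finset.mem_coe] at hp hp'
        simp only at heq
        have hr := (Finset.mem_filter.mp hp.1).2
        have hr' := (Finset.mem_filter.mp hp'.1).2
        have hzz : z = z' := by
          by_contra hne
          have h1 := hZsep z hp.2 z' hp'.2 hne
          have h2 : (z : ℝ) - z' = r' - r := by
            have : (r : ℝ) + z = r' + z' := by exact_mod_cast heq
            linarith
          rw [h2] at h1
          have : |(r' : ℝ) - r| ≤ l := by
            rw [abs_le]; constructor <;> linarith [hr.1, hr.2, hr'.1, hr'.2]
          linarith
        subst hzz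
        rw [add_right_cancel heq]
      have h1 := Finset.card_image_of_injOn hinj
      have h2 := hcardH ((RI ×ˢ Z).image (fun p : ℤ × ℤ => p.1 + p.2)) (1 + 1 + 1) (by omega) (by
        intro w hw
        obtain ⟨p, hp, rfl⟩ := Finset.mem_image.mp hw
        have hp := Finset.mem_product.mp hp
        exact HH_add (hBB (hRB (Finset.mem_filter.mp hp.1).1)) (hAH _ (hZA hp.2)))
      rw [h1, Finset.card_product, Nat.cast_mul] at h2
      exact h2
    have hls : 0 < l ^ s := Real.rpow_pos_of_pos (by linarith) s
    have e1 : (A.card : ℝ) ≤ 2 * K ^ 3 * l ^ s * Z.card := by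
      calc (A.card : ℝ) ≤ K ^ 2 * A'.card := hA'c
        _ ≤ K ^ 2 * (K * (2 * l ^ s) * Z.card) := by
          gcongr
          refine hZc.trans ?_
          gcongr
          exact rpow_mul_le hs1 (by norm_num) (by linarith)
        _ = _ := by ring
    have e2 : (A.card : ℝ) * RI.card ≤ A.card * (K ^ (4 + 34 * n) * l ^ s) := by
      calc (A.card : ℝ) * RI.card ≤ (2 * K ^ 3 * l ^ s * Z.card) * RI.card := by gcongr
        _ = 2 * K ^ 3 * l ^ s * (RI.card * Z.card) := by ring
        _ ≤ K * K ^ 3 * l ^ s * (K ^ (34 * n) * A.card) := by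
          rw [← hh]
          gcongr
          linarith
        _ = _ := by rw [pow_add]; ring
    have e3 := le_of_mul_le_mul_left e2 hApos
    refine e3.trans ?_
    have := hKpow (show 4 + 34 * n ≤ e by omega)
    gcongr
  have hdil' : ∀ r ∈ insert p₀ R, ((DD N (B' + B') p₀ + DD N (B' + B') r).card : ℝ) ≤ K ^ e * N ^ s := by
    intro r hr
    by_cases hrR : r ∈ R
    · have h1 := hRim r hrR
      have h2 := floor_add_card (((B' + B') ×ˢ (B' + B')).image
        (fun b => ⌊((p₀ * b.1 + r * b.2 : ℤ) : ℝ) / N⌋)) (DD N (B' + B') p₀) (DD N (B' + B') r) (by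
          intro u hu v hv
          obtain ⟨b, hb, rfl⟩ := Finset.mem_image.mp hu
          obtain ⟨b', hb', rfl⟩ := Finset.mem_image.mp hv
          have hm : ⌊((p₀ * b : ℤ) : ℝ) / N + ((r * b' : ℤ) : ℝ) / N⌋ ∈
            ((B' + B') ×ˢ (B' + B')).image (fun b => ⌊((p₀ * b.1 + r * b.2 : ℤ) : ℝ) / N⌋) := by
            refine Finset.mem_image.mpr ⟨(b, b'), Finset.mem_product.mpr ⟨hb, hb'⟩, ?_⟩
            rw [← add_div]; push_cast; rfl
          rcases floor_two (((p₀ * b : ℤ) : ℝ) / N) (((r * b' : ℤ) : ℝ) / N) with h' | h'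
          · left; rw [h']; exact hm
          · right; rw [h']; exact hm)
      generalize ((B' + B') ×ˢ (B' + B')).image (fun b => ⌊((p₀ * b.1 + r * b.2 : ℤ) : ℝ) / N⌋) = I at *
      rw [hh] at h1
      have e1 : (A.card : ℝ) ^ 4 * I.card ≤ (A.card : ℝ) ^ 4 * (40 * K ^ (7 + 136 * n) * A.card) := by
        calc (A.card : ℝ) ^ 4 * I.card = (I.card * ((A.card : ℝ) ^ 2 / (2 * K ^ 3)) ^ 2) * (4 * K ^ 6) := by
              field_simp; ring
          _ ≤ (10 * (K * A.card) * (K ^ (34 * n) * A.card) ^ 4) * (4 * K ^ 6) := by gcongr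
          _ = _ := by
              rw [pow_add, mul_pow, ← pow_mul, show 34 * n * 4 = 136 * n by ring]; ring
      have e2 := le_of_mul_le_mul_left e1 (by positivity)
      calc _ ≤ _ := h2
        _ ≤ K * (K ^ 2 * K ^ (7 + 136 * n) * (K * N ^ s)) := by
          gcongr
          · linarith
          · exact e2.trans (by gcongr)
        _ = K ^ (11 + 136 * n) * N ^ s := by
          rw [pow_add, pow_add]; ring
        _ ≤ _ := by
          have := hKpow (show 11 + 136 * n ≤ e by omega)
          gcongr
    · have hrp : r = p₀ := by
        rcases Finset.mem_insert.mp hr with h' | h'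
        · exact h'
        · exact absurd h' hrR
      subst hrp
      have h2 := floor_add_card (((B' + B') + (B' + B')).image
        (fun b => ⌊((r * b : ℤ) : ℝ) / N⌋)) (DD N (B' + B') r) (DD N (B' + B') r) (by
          intro u hu v hv
          obtain ⟨b, hb, rfl⟩ := Finset.mem_image.mp hu
          obtain ⟨b', hb', rfl⟩ := Finset.mem_image.mp hv
          have hm : ⌊((r * b : ℤ) : ℝ) / N + ((r * b' : ℤ) : ℝ) / N⌋ ∈
            ((B' + B') + (B' + B')).image (fun b => ⌊((r * b : ℤ) : ℝ) / N⌋) := by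
            refine Finset.mem_image.mpr ⟨b + b', Finset.add_mem_add hb hb', ?_⟩
            rw [← add_div, mul_add]; push_cast; rfl
          rcases floor_two (((r * b : ℤ) : ℝ) / N) (((r * b' : ℤ) : ℝ) / N) with h' | h'
          · left; rw [h']; exact hm
          · right; rw [h']; exact hm)
      have h3 : ((((B' + B') + (B' + B')).image (fun b => ⌊((r * b : ℤ) : ℝ) / N⌋)).card : ℝ) ≤ h :=
        le_trans (Nat.cast_le.mpr Finset.card_image_le) (hcardH _ (1 + 1 + (1 + 1)) (by omega) (hsubH hBB hBB))
      calc _ ≤ _ := h2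
        _ ≤ K * (K ^ (34 * n) * (K * N ^ s)) := by
          gcongr
          · linarith
          · refine h3.trans ?_
            rw [hh]; gcongr
        _ = K ^ (2 + 34 * n) * N ^ s := by rw [pow_add]; ring
        _ ≤ _ := by
          have := hKpow (show 2 + 34 * n ≤ e by omega)
          gcongr
  have key := (Setup.core (s := s) (N := N) (K := K ^ e) (p₀ := p₀) (R := R) (B := B' + B')
    { s0 := hs0
      s1 := hs1
      N1 := hN
      K10 := hK.trans (le_self_pow₀ hK1 (by omega))
      p0 := by
        rw [div_le_iff₀ hL0] at hp₀N
        have hp0 : (0 : ℝ) < p₀ := by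
          by_contra hc
          have := mul_nonpos_of_nonpos_of_nonneg (not_lt.mp hc) hL0.le
          linarith
        have : L ≤ K ^ e := by rw [hL]; exact hKpow (by omega)
        calc N ≤ p₀ * L := hp₀N
          _ ≤ p₀ * K ^ e := by gcongr
          _ = _ := by ring
      RB := hRB
      R0 := by
        intro r hr
        obtain ⟨a, ha, b, hb, rfl⟩ := Finset.mem_add.mp (hRB hr)
        push_cast
        linarith [hA0 a (hB' ha), hA0 b (hB' hb)]
      R2 := by
        intro r hr
        obtain ⟨a, ha, b, hb, rfl⟩ := Finset.mem_add.mp (hRB hr)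
        push_cast
        linarith [hAN a (hB' ha), hAN b (hB' hb)]
      card := hcard'
      frost := hfrost'
      dil := hdil' })
  rw [pow_mul]
  exact key

end CSP


lemma CSP.cover_bound (δ c M : ℝ) (hδ : 0 < δ) (hc : 0 ≤ c) (hM : 0 ≤ M) (G : Finset (ℝ × ℝ))
    (F : ℝ × ℝ → ℝ) (f : ℝ × ℝ → ℤ) (h : ∀ p ∈ G, |(f p : ℝ) - c * F p / δ| ≤ M) :
    ((G.image f).card : ℝ) ≤ (c + 2 * M + 1) * (coverNum δ (F '' (↑G : Set (ℝ × ℝ))) : ℝ) := by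
  have hne : {m : ℕ | ∃ Fam : Finset (Set ℝ), Fam.card = m ∧
    (∀ U ∈ Fam, EMetric.diam U ≤ ENNReal.ofReal δ) ∧
      F '' (↑G : Set (ℝ × ℝ)) ⊆ ⋃ U ∈ Fam, U}.Nonempty := by
    refine ⟨_, G.image (fun p => {F p}), rfl, ?_, ?_⟩
    · intro U hU
      obtain ⟨p, _, rfl⟩ := Finset.mem_image.mp hU
      have h0 : EMetric.diam ({F p} : Set ℝ) = 0 := Metric.ediam_singleton
      rw [h0]
      exact zero_le
    · rintro _ ⟨p, hp, rfl⟩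
      simp only [Set.mem_iUnion]
      exact ⟨{F p}, Finset.mem_image_of_mem _ hp, rfl⟩
  obtain ⟨Fam, hcard, hdiam, hcov⟩ := Nat.sInf_mem hne
  have hcard' : Fam.card = coverNum δ (F '' (↑G : Set (ℝ × ℝ))) := hcard
  rw [← hcard']
  have := CSP.rep_count (G.image f) Fam (fun w U => ∃ p ∈ G, f p = w ∧ F p ∈ U) 1 (c + 2 * M + 1) (by
    intro w hw
    obtain ⟨p, hp, rfl⟩ := Finset.mem_image.mp hw
    have h1 := hcov ⟨p, hp, rfl⟩
    simp only [Set.mem_iUnion] at h1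
    obtain ⟨U, hU, hpU⟩ := h1
    have : 0 < (Fam.filter (fun U => ∃ q ∈ G, f q = f p ∧ F q ∈ U)).card :=
      Finset.card_pos.mpr ⟨U, Finset.mem_filter.mpr ⟨hU, p, hp, rfl, hpU⟩⟩
    exact_mod_cast this) (by
    intro U hU
    apply CSP.card_le_of_diam _ _ (by positivity)
    intro x hx y hy
    obtain ⟨p, hp, rfl, hpU⟩ := (Finset.mem_filter.mp hx).2
    obtain ⟨q, hq, rfl, hqU⟩ := (Finset.mem_filter.mp hy).2
    have h1 : edist (F p) (F q) ≤ ENNReal.ofReal δ :=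
      (EMetric.edist_le_diam_of_mem hpU hqU).trans (hdiam U hU)
    rw [edist_dist, ENNReal.ofReal_le_ofReal_iff hδ.le, Real.dist_eq] at h1
    have h2 := abs_le.mp (h p hp)
    have h3 := abs_le.mp (h q hq)
    have h4 : c * F p / δ - c * F q / δ ≤ c := by
      rw [← sub_div, ← mul_sub, div_le_iff₀ hδ]
      have := (abs_le.mp h1).2
      gcongr
    linarith [h2.1, h2.2, h3.1, h3.2])
  linarith

lemma CSP.prod_floor {N x y : ℝ} (hN : 1 ≤ N) (hx0 : 0 ≤ x) (hx1 : x ≤ 1) (hy0 : 0 ≤ y)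
    (hy1 : y ≤ 1) : |(⌊x * N⌋ * ⌊y * N⌋ : ℝ) / N - x * y * N| ≤ 2 := by
  have hN0 : 0 < N := by linarith
  have a1 := Int.floor_le (x * N)
  have a2 := (Int.lt_floor_add_one (x * N)).le
  have a3 := Int.floor_le (y * N)
  have a4 := (Int.lt_floor_add_one (y * N)).le
  have a5 : (0 : ℝ) ≤ ⌊x * N⌋ := by exact_mod_cast Int.floor_nonneg.mpr (by positivity)
  have a6 : (0 : ℝ) ≤ ⌊y * N⌋ := by exact_mod_cast Int.floor_nonneg.mpr (by positivity)
  generalize (⌊x * N⌋ : ℝ) = u at *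
  generalize (⌊y * N⌋ : ℝ) = v at *
  have b1 : v / N ≤ 1 := by rw [div_le_one hN0]; nlinarith
  have b2 : 0 ≤ v / N := by positivity
  have e : u * v / N - x * y * N = -((x * N - u) * (v / N)) - x * (y * N - v) := by
    field_simp; ring
  rw [e, abs_le]
  have c1 : (x * N - u) * (v / N) ≤ 1 * 1 := by
    apply mul_le_mul <;> linarith
  have c2 : x * (y * N - v) ≤ 1 * 1 := by
    apply mul_le_mul <;> linarith
  have c3 : 0 ≤ (x * N - u) * (v / N) := mul_nonneg (by linarith) b2
  have c4 : 0 ≤ x * (y * N - v) := mul_nonneg hx0 (by linarith)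
  constructor <;> linarith

set_option maxHeartbeats 2000000 in
/-- Theorem: for a nondegenerate rational quadratic form `φ(x,y) = a₁x² + a₂xy + a₃y²`
(`a₂² - 4a₁a₃ ≠ 0`) and `0 < s < 1`, there are `e = e(s) > 0`, `ε = ε(φ,s) > 0`,
`K = K(φ,s) > 0`, and for each `C ≥ 1` a `δ₀ = δ₀(φ,s,C) > 0`, such that for all
`0 < δ ≤ δ₀`: if `A ⊆ [0,1]` is δ-separated of cardinality `⌈δ^{-s}⌉` with the
non-concentration bound, and `G ⊆ A × A` has all fibers of size at least `δ^ε #A`, then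
`E_δ(A +_G A) + E_δ(φ_G(A,A)) ≥ K C^{-e} δ^{-ε} #A`. -/
theorem covering_sum_product_conditionally (s : ℝ) (hs0 : 0 < s) (hs1 : s < 1) :
    ∃ e : ℝ, 0 < e ∧
      ∀ (a₁ a₂ a₃ : ℚ), a₂ ^ 2 - 4 * a₁ * a₃ ≠ 0 →
        ∃ ε K : ℝ, 0 < ε ∧ 0 < K ∧
          ∀ C : ℝ, 1 ≤ C →
            ∃ δ₀ : ℝ, 0 < δ₀ ∧
              ∀ δ : ℝ, 0 < δ → δ ≤ δ₀ →
                ∀ A : Finset ℝ, (↑A : Set ℝ) ⊆ Set.Icc 0 1 →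
                  (∀ x ∈ A, ∀ y ∈ A, x ≠ y → δ ≤ |x - y|) →
                  A.card = ⌈δ ^ (-s)⌉₊ →
                  (∀ x l : ℝ, δ ≤ l →
                    ((A.filter (fun t => t ∈ Set.Icc x (x + l))).card : ℝ) ≤
                      C * l ^ s * (A.card : ℝ)) →
                  ∀ G : Finset (ℝ × ℝ), G ⊆ A ×ˢ A →
                    (∀ x ∈ A, δ ^ ε * (A.card : ℝ) ≤
                      ((G.filter (fun p => p.1 = x)).card : ℝ)) →
                    (∀ y ∈ A, δ ^ ε * (A.card : ℝ) ≤
                      ((G.filter (fun p => p.2 = y)).card : ℝ)) →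
                    K * C ^ (-e) * δ ^ (-ε) * (A.card : ℝ) ≤
                      (coverNum δ ((fun p : ℝ × ℝ => p.1 + p.2) '' (↑G : Set (ℝ × ℝ))) : ℝ) +
                        (coverNum δ
                          ((fun p : ℝ × ℝ =>
                            (a₁ : ℝ) * p.1 ^ 2 + (a₂ : ℝ) * (p.1 * p.2) + (a₃ : ℝ) * p.2 ^ 2) ''
                            (↑G : Set (ℝ × ℝ))) : ℝ) := by
  refine ⟨1, one_pos, ?_⟩
  intro a₁ a₂ a₃ hdisc
  obtain ⟨d, hd⟩ : ∃ d : ℕ, d = a₁.den * a₂.den * a₃.den := ⟨_, rfl⟩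
  have hd0 : 0 < d := by
    rw [hd]; exact Nat.mul_pos (Nat.mul_pos a₁.den_pos a₂.den_pos) a₃.den_pos
  have hq : ∀ a : ℚ, a * (a.den : ℚ) = a.num := fun a => Rat.mul_den_eq_num a
  obtain ⟨α₁, hα₁⟩ : ∃ α : ℤ, (α : ℚ) = d * a₁ := ⟨a₁.num * a₂.den * a₃.den, by
    rw [hd]; push_cast; rw [← hq a₁]; ring⟩
  obtain ⟨α₂, hα₂⟩ : ∃ α : ℤ, (α : ℚ) = d * a₂ := ⟨a₂.num * a₁.den * a₃.den, by
    rw [hd]; push_cast; rw [← hq a₂]; ring⟩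
  obtain ⟨α₃, hα₃⟩ : ∃ α : ℤ, (α : ℚ) = d * a₃ := ⟨a₃.num * a₁.den * a₂.den, by
    rw [hd]; push_cast; rw [← hq a₃]; ring⟩
  have hdq : (d : ℚ) ≠ 0 := by exact_mod_cast hd0.ne'
  have hdisc' : α₂ ^ 2 - 4 * α₁ * α₃ ≠ 0 := by
    intro h
    have h1 : (α₂ : ℚ) ^ 2 - 4 * α₁ * α₃ = 0 := by exact_mod_cast h
    rw [hα₁, hα₂, hα₃] at h1
    have h2 : (d : ℚ) ^ 2 * (a₂ ^ 2 - 4 * a₁ * a₃) = 0 := by linear_combination h1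
    exact hdisc ((mul_eq_zero.mp h2).resolve_left (pow_ne_zero 2 hdq))
  have hα₁' : (α₁ : ℝ) = d * a₁ := by exact_mod_cast congrArg (Rat.cast : ℚ → ℝ) hα₁
  have hα₂' : (α₂ : ℝ) = d * a₂ := by exact_mod_cast congrArg (Rat.cast : ℚ → ℝ) hα₂
  have hα₃' : (α₃ : ℝ) = d * a₃ := by exact_mod_cast congrArg (Rat.cast : ℚ → ℝ) hα₃
  obtain ⟨m, hm⟩ := CSP.integer_thm s hs0 hs1 α₁ α₂ α₃ hdisc'
  obtain ⟨κ, hκ⟩ : ∃ κ : ℝ, κ = s * (1 - s) / 18 := ⟨_, rfl⟩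
  have hκ0 : 0 < κ := by rw [hκ]; have : 0 < 1 - s := by linarith
                         positivity
  rw [← hκ] at hm
  obtain ⟨ε, hε⟩ : ∃ ε : ℝ, ε = κ / (2 * (m + 1)) := ⟨_, rfl⟩
  have hε0 : 0 < ε := by rw [hε]; positivity
  have hεm : 2 * ε * m < κ := by
    have : 2 * ε * (m + 1) = κ := by rw [hε]; field_simp
    nlinarith
  obtain ⟨T, hT⟩ : ∃ T : ℝ, T = |(α₁ : ℝ)| + |(α₂ : ℝ)| + |(α₃ : ℝ)| := ⟨_, rfl⟩
  have hT0 : 0 ≤ T := by rw [hT]; positivity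
  obtain ⟨c₀, hc₀⟩ : ∃ c₀ : ℝ, c₀ = 10 + d + 4 * T + 3 := ⟨_, rfl⟩
  have hc₀10 : 10 ≤ c₀ := by rw [hc₀]; have : (0 : ℝ) ≤ d := Nat.cast_nonneg _
                             linarith
  refine ⟨ε, 1, hε0, one_pos, ?_⟩
  intro C hC
  have hCc : 0 < C * c₀ := by positivity
  refine ⟨min (1 / 2) ((C * c₀) ^ (-(1 / ε))), lt_min (by norm_num) (by positivity), ?_⟩
  intro δ hδ hδ₀ A hA01 hsep hAcard hfrost G hG hrow hcol
  have hδ2 : δ ≤ 1 / 2 := hδ₀.trans (min_le_left _ _)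
  have hδ3 : δ ≤ (C * c₀) ^ (-(1 / ε)) := hδ₀.trans (min_le_right _ _)
  by_contra hcon
  have hcon := not_le.mp hcon
  obtain ⟨N, hN⟩ : ∃ N : ℝ, N = δ⁻¹ := ⟨_, rfl⟩
  have hN2 : 2 ≤ N := by
    rw [hN]; exact (le_inv_comm₀ (by norm_num) hδ).mpr (by linarith)
  have hN0 : 0 < N := by linarith
  have hNy : ∀ y : ℝ, δ ^ (-y) = N ^ y := by
    intro y
    rw [hN, Real.rpow_neg hδ.le, Real.inv_rpow hδ.le]
  have hdiv : ∀ x : ℝ, x / δ = x * N := fun x => by rw [hN, div_eq_mul_inv]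
  have hδN : δ * N = 1 := by rw [hN]; exact mul_inv_cancel₀ hδ.ne'
  obtain ⟨X, hX⟩ : ∃ X : ℝ, X = N ^ ε := ⟨_, rfl⟩
  have hX1 : C * c₀ ≤ X := by
    rw [hX, ← hNy]
    have h1 := (Real.rpow_le_rpow_iff_of_neg (lt_of_lt_of_le hδ hδ3) hδ (by linarith : -ε < 0)).mpr hδ3
    rw [← Real.rpow_mul hCc.le, show -(1 / ε) * -ε = 1 by field_simp, Real.rpow_one] at h1
    exact h1
  have hXc : c₀ ≤ X := le_trans (by nlinarith) hX1
  have hX10 : 10 ≤ X := hc₀10.trans hXc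
  have hX0 : 0 < X := by linarith
  have hXX : N ^ (2 * ε) = X * X := by
    rw [hX, ← Real.rpow_add hN0]; congr 1; ring
  have hδX : δ ^ ε * X = 1 := by
    rw [hX, ← hNy, ← Real.rpow_add hδ]; simp
  have hδs : δ ^ s * N ^ s = 1 := by
    rw [← hNy, ← Real.rpow_add hδ]; simp
  rw [hNy, ← hX, Real.rpow_neg (by linarith), Real.rpow_one] at hcon
  have hCinv : C⁻¹ ≤ 1 := inv_le_one_of_one_le₀ hC
  have hcov : ∀ u v : ℕ, 1 * C⁻¹ * X * (A.card : ℝ) > (u : ℝ) + v →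
      (u : ℝ) ≤ X * A.card ∧ (v : ℝ) ≤ X * A.card := by
    intro u v h
    have h1 : 1 * C⁻¹ * X * (A.card : ℝ) ≤ 1 * 1 * X * A.card := by gcongr
    have hu : (0 : ℝ) ≤ u := Nat.cast_nonneg _
    have hv : (0 : ℝ) ≤ v := Nat.cast_nonneg _
    constructor <;> linarith
  obtain ⟨hcov1, hcov2⟩ := hcov _ _ hcon
  clear hcov hcon
  have hx01 : ∀ x ∈ A, 0 ≤ x ∧ x ≤ 1 := fun x hx => hA01 hx
  let F : ℝ → ℤ := fun x => ⌊x * N⌋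
  have hFle : ∀ x, (F x : ℝ) ≤ x * N := fun x => Int.floor_le _
  have hltF : ∀ x, x * N < F x + 1 := fun x => Int.lt_floor_add_one _
  have hFinj : ∀ x ∈ A, ∀ y ∈ A, F x = F y → x = y := by
    intro x hx y hy hxy
    by_contra hne
    have h1 := hsep x hx y hy hne
    have h2 : |x - y| < δ := by
      apply CSP.floor_eq_abs hδ
      rw [hdiv, hdiv]; exact hxy
    linarith
  have hFinj' : Set.InjOn F (A : Set ℝ) := fun x hx y hy h => hFinj x hx y hy h
  have hAz : (A.image F).card = A.card := Finset.card_image_of_injOn hFinj'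
  have hs_pos : 0 < N ^ s := by positivity
  have hNs1 : 1 ≤ N ^ s := Real.one_le_rpow (by linarith) hs0.le
  have hAlow : N ^ s ≤ A.card := by
    rw [hAcard, hNy]; exact Nat.le_ceil _
  have hAup : (A.card : ℝ) ≤ 2 * N ^ s := by
    rw [hAcard, hNy]
    have := Nat.ceil_lt_add_one hs_pos.le
    linarith
  have hXX1 : X ≤ X * X := by nlinarith
  let FF : ℝ × ℝ → ℤ × ℤ := fun p => (F p.1, F p.2)
  have hfib : ∀ Gx : Finset (ℝ × ℝ), ∀ Y : Finset ℤ, δ ^ ε * (A.card : ℝ) ≤ Gx.card →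
      Gx.card ≤ Y.card → ((A.image F).card : ℝ) ≤ X * X * Y.card := by
    intro Gx Y h1 h2
    have h3 : (Gx.card : ℝ) ≤ Y.card := Nat.cast_le.mpr h2
    rw [hAz]
    calc (A.card : ℝ) = X * (δ ^ ε * A.card) := by linear_combination (-(A.card : ℝ)) * hδX
      _ ≤ X * Y.card := by gcongr; exact h1.trans h3
      _ ≤ X * X * Y.card := by gcongr
  have hfinal := hm N (X * X) (A.image F) (G.image FF) (by linarith) (by nlinarith)
    (by
      intro a ha
      obtain ⟨x, hx, rfl⟩ := Finset.mem_image.mp ha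
      exact_mod_cast Int.floor_nonneg.mpr (mul_nonneg (hx01 x hx).1 hN0.le))
    (by
      intro a ha
      obtain ⟨x, hx, rfl⟩ := Finset.mem_image.mp ha
      have := hFle x
      have := mul_le_mul_of_nonneg_right (hx01 x hx).2 hN0.le
      linarith)
    (by rw [hAz]; exact hAlow)
    (by
      rw [hAz]
      refine hAup.trans ?_
      gcongr
      linarith)
    (by
      intro x l hl
      have h1 : ((A.image F).filter (fun t : ℤ => x ≤ t ∧ (t : ℝ) ≤ x + l)).card ≤
          (A.filter (fun t => t ∈ Set.Icc (δ * x) (δ * x + (l + 1) * δ))).card := by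
        refine le_trans (Finset.card_le_card ?_) (Finset.card_image_le (f := F))
        intro z hz
        have hz := Finset.mem_filter.mp hz
        obtain ⟨t, ht, rfl⟩ := Finset.mem_image.mp hz.1
        refine Finset.mem_image.mpr ⟨t, Finset.mem_filter.mpr ⟨ht, ?_⟩, rfl⟩
        have e1 := hFle t
        have e2 := hltF t
        have e3 : t = δ * (t * N) := by linear_combination (-t) * hδN
        constructor
        · rw [e3]
          gcongr
          linarith [hz.2.1]
        · have : δ * (t * N) ≤ δ * (x + l + 1) := by
            gcongr
            linarith [hz.2.2]
          linarith
      have h2 := hfrost (δ * x) ((l + 1) * δ) (by nlinarith)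
      have h3 : ((l + 1) * δ) ^ s ≤ 2 * (l ^ s * δ ^ s) := by
        rw [← Real.mul_rpow (by linarith) hδ.le]
        refine le_trans ?_ (CSP.rpow_mul_le hs1 (by norm_num) (by positivity))
        apply Real.rpow_le_rpow (by positivity) _ hs0.le
        nlinarith
      have hls : 0 < l ^ s := Real.rpow_pos_of_pos (by linarith) s
      calc _ ≤ _ := Nat.cast_le.mpr h1
        _ ≤ _ := h2
        _ ≤ C * (2 * (l ^ s * δ ^ s)) * (2 * N ^ s) := by gcongr
        _ = 4 * C * l ^ s := by linear_combination (4 * C * l ^ s) * hδs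
        _ ≤ X * X * l ^ s := by
          have hCX : C ≤ X := le_trans (by nlinarith) hX1
          have h4C : 4 * C ≤ X * X := mul_le_mul (by linarith) hCX (by linarith) (by linarith)
          exact mul_le_mul_of_nonneg_right h4C hls.le)
    (by
      intro p hp
      obtain ⟨q, hq, rfl⟩ := Finset.mem_image.mp hp
      have := Finset.mem_product.mp (hG hq)
      exact Finset.mem_product.mpr ⟨Finset.mem_image_of_mem _ this.1, Finset.mem_image_of_mem _ this.2⟩)
    (by
      intro x' hx'
      obtain ⟨x, hx, rfl⟩ := Finset.mem_image.mp hx'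
      refine hfib _ _ (hrow x hx) ?_
      apply Finset.card_le_card_of_injOn (fun p => F p.2)
      · intro p hp
        have hp := Finset.mem_filter.mp (Finset.mem_coe.mp hp)
        have hpA := Finset.mem_product.mp (hG hp.1)
        refine Finset.mem_coe.mpr (Finset.mem_filter.mpr ⟨Finset.mem_image_of_mem _ hpA.2, ?_⟩)
        refine Finset.mem_image.mpr ⟨p, hp.1, ?_⟩
        simp only [FF, hp.2]
      · intro p hp q hq hpq
        have hp := Finset.mem_filter.mp (Finset.mem_coe.mp hp)
        have hq := Finset.mem_filter.mp (Finset.mem_coe.mp hq)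
        exact Prod.ext (hp.2.trans hq.2.symm) (hFinj _ (Finset.mem_product.mp (hG hp.1)).2 _
          (Finset.mem_product.mp (hG hq.1)).2 hpq))
    (by
      intro y' hy'
      obtain ⟨y, hy, rfl⟩ := Finset.mem_image.mp hy'
      refine hfib _ _ (hcol y hy) ?_
      apply Finset.card_le_card_of_injOn (fun p => F p.1)
      · intro p hp
        have hp := Finset.mem_filter.mp (Finset.mem_coe.mp hp)
        have hpA := Finset.mem_product.mp (hG hp.1)
        refine Finset.mem_coe.mpr (Finset.mem_filter.mpr ⟨Finset.mem_image_of_mem _ hpA.1, ?_⟩)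
        refine Finset.mem_image.mpr ⟨p, hp.1, ?_⟩
        simp only [FF, hp.2]
      · intro p hp q hq hpq
        have hp := Finset.mem_filter.mp (Finset.mem_coe.mp hp)
        have hq := Finset.mem_filter.mp (Finset.mem_coe.mp hq)
        exact Prod.ext (hFinj _ (Finset.mem_product.mp (hG hp.1)).1 _
          (Finset.mem_product.mp (hG hq.1)).1 hpq) (hp.2.trans hq.2.symm))
    (by
      rw [Finset.image_image, hAz]
      have h1 := CSP.cover_bound δ 1 2 hδ (by norm_num) (by norm_num) G (fun p => p.1 + p.2)
        ((fun p => p.1 + p.2) ∘ FF) (by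
          intro p hp
          simp only [FF, Function.comp]
          rw [hdiv]
          push_cast
          have := hFle p.1
          have := hltF p.1
          have := hFle p.2
          have := hltF p.2
          rw [abs_le]; constructor <;> linarith)
      refine h1.trans ?_
      calc _ ≤ X * (X * (A.card : ℝ)) := by
            gcongr
            linarith
        _ = _ := by ring)
    (by
      rw [Finset.image_image, hAz]
      have h1 := CSP.cover_bound δ d (2 * T + 1) hδ (Nat.cast_nonneg _) (by positivity) G
        (fun p : ℝ × ℝ => (a₁ : ℝ) * p.1 ^ 2 + (a₂ : ℝ) * (p.1 * p.2) + (a₃ : ℝ) * p.2 ^ 2)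
        ((fun p : ℤ × ℤ => ⌊((α₁ * p.1 ^ 2 + α₂ * (p.1 * p.2) + α₃ * p.2 ^ 2 : ℤ) : ℝ) / N⌋) ∘ FF) (by
          intro p hp
          have hpA := Finset.mem_product.mp (hG hp)
          obtain ⟨u0, u1⟩ := hx01 _ hpA.1
          obtain ⟨v0, v1⟩ := hx01 _ hpA.2
          simp only [FF, Function.comp]
          rw [hdiv]
          have f1 := CSP.prod_floor (N := N) (by linarith) u0 u1 u0 u1
          have f2 := CSP.prod_floor (N := N) (by linarith) u0 u1 v0 v1
          have f3 := CSP.prod_floor (N := N) (by linarith) v0 v1 v0 v1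
          have g1 := Int.floor_le (((α₁ * F p.1 ^ 2 + α₂ * (F p.1 * F p.2) + α₃ * F p.2 ^ 2 : ℤ) : ℝ) / N)
          have g2 := Int.lt_floor_add_one
            (((α₁ * F p.1 ^ 2 + α₂ * (F p.1 * F p.2) + α₃ * F p.2 ^ 2 : ℤ) : ℝ) / N)
          have e1 : ((α₁ * F p.1 ^ 2 + α₂ * (F p.1 * F p.2) + α₃ * F p.2 ^ 2 : ℤ) : ℝ) / N
            - d * ((a₁ : ℝ) * p.1 ^ 2 + (a₂ : ℝ) * (p.1 * p.2) + (a₃ : ℝ) * p.2 ^ 2) * N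
            = α₁ * ((⌊p.1 * N⌋ * ⌊p.1 * N⌋ : ℝ) / N - p.1 * p.1 * N)
              + α₂ * ((⌊p.1 * N⌋ * ⌊p.2 * N⌋ : ℝ) / N - p.1 * p.2 * N)
              + α₃ * ((⌊p.2 * N⌋ * ⌊p.2 * N⌋ : ℝ) / N - p.2 * p.2 * N) := by
            simp only [F]
            push_cast
            rw [hα₁', hα₂', hα₃']
            ring
          have e2 : ∀ (α : ℤ) (z : ℝ), |z| ≤ 2 → |α * z| ≤ 2 * |(α : ℝ)| := by
            intro α z hz
            rw [abs_mul, mul_comm]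
            gcongr
          have b1 := abs_le.mp (e2 α₁ _ f1)
          have b2 := abs_le.mp (e2 α₂ _ f2)
          have b3 := abs_le.mp (e2 α₃ _ f3)
          rw [abs_le]
          constructor <;> linarith [b1.1, b1.2, b2.1, b2.2, b3.1, b3.2])
      refine h1.trans ?_
      calc _ ≤ X * (X * (A.card : ℝ)) := by
            gcongr
            linarith
        _ = _ := by ring)
  rw [← hXX, ← Real.rpow_natCast, ← Real.rpow_mul hN0.le] at hfinal
  have := Real.rpow_lt_rpow_of_exponent_lt (by linarith : 1 < N) hεm
  linarith
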